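/- arXiv:2507.19221 — 2 statements merged into one kernel-verified Lean document; each statement's English description precedes it below -/
import Mathlib

section
/- Let μ, μ̃ ∈ P₂(ℝ) and let ν, ν̃ ∈ P₂(ℝ) be absolutely continuous with respect to Lebesgue measure. If ρ* is a forward projection of ν above μ, and ρ̃* is a forward projection of ν̃ above μ̃, then W₂(ρ*, ρ̃*) ≤ 2·W₂(ν, ν̃) + W₂(μ, μ̃). -/
open MeasureTheory

noncomputable section

variable {V : Type*} [NormedAddCommGroup V] [NormedSpace ℝ V]
  [MeasurableSpace V] [BorelSpace V]

/-- `π` is a coupling of `μ` and `ν`. -/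
def IsCoupling (π : Measure (V × V)) (μ ν : Measure V) : Prop :=
  IsProbabilityMeasure π ∧ π.map Prod.fst = μ ∧ π.map Prod.snd = ν

/-- Squared 2-Wasserstein distance, as infimum of quadratic cost over couplings. -/
def W2sq (μ ν : Measure V) : ℝ :=
  sInf {c : ℝ | ∃ π : Measure (V × V), IsCoupling π μ ν ∧ c = ∫ p, ‖p.1 - p.2‖ ^ 2 ∂π}

/-- The 2-Wasserstein distance. -/
def W2 (μ ν : Measure V) : ℝ := Real.sqrt (W2sq μ ν)

/-- `μ` is a Borel probability measure with finite second moment. -/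
def IsP2 (μ : Measure V) : Prop :=
  IsProbabilityMeasure μ ∧ Integrable (fun x => ‖x‖ ^ 2) μ

/-- Convex order: `∫ φ dμ ≤ ∫ φ dν` for every convex `φ` for which both integrals exist. -/
def ConvexOrder (μ ν : Measure V) : Prop :=
  ∀ φ : V → ℝ, ConvexOn ℝ Set.univ φ → Integrable φ μ → Integrable φ ν →
    ∫ x, φ x ∂μ ≤ ∫ x, φ x ∂ν

/-- `X` is a Borel map, square-integrable w.r.t. `ρ₀`. -/
def MemL2 (ρ₀ : Measure V) (X : V → V) : Prop :=
  Measurable X ∧ Integrable (fun x => ‖X x‖ ^ 2) ρ₀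

/-- `μs` is a backward projection of `μ` onto the convex order cone below `ν`. -/
def IsBackwardProj (ν μ μs : Measure V) : Prop :=
  IsP2 μs ∧ ConvexOrder μs ν ∧
    ∀ ρ : Measure V, IsP2 ρ → ConvexOrder ρ ν → W2 μs μ ≤ W2 ρ μ

/-- `ρs` is a forward projection of `ν` above `μ`. -/
def IsForwardProj (μ ν ρs : Measure V) : Prop :=
  IsP2 ρs ∧ ConvexOrder μ ρs ∧
    ∀ ρ : Measure V, IsP2 ρ → ConvexOrder μ ρ → W2 ρs ν ≤ W2 ρ ν

/-- `ρs` is a metric extrapolation of `(ν₀, ν₁)` at time `t`. -/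
def IsMetricExtrap (t : ℝ) (ν₀ ν₁ ρs : Measure V) : Prop :=
  IsP2 ρs ∧ ∀ ρ : Measure V, IsP2 ρ →
    W2sq ρs ν₁ / (2 * (t - 1)) - W2sq ρs ν₀ / (2 * t) ≤
      W2sq ρ ν₁ / (2 * (t - 1)) - W2sq ρ ν₀ / (2 * t)

/-- Constant-speed minimizing geodesic on `[a,b]` for `W₂`. -/
def IsGeodesic (a b : ℝ) (γ : ℝ → Measure V) : Prop :=
  (∀ s ∈ Set.Icc a b, IsP2 (γ s)) ∧
    ∀ s₁ ∈ Set.Icc a b, ∀ s₂ ∈ Set.Icc a b,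
      W2 (γ s₁) (γ s₂) = |s₁ - s₂| / (b - a) * W2 (γ a) (γ b)

/-- Topological support of a measure. -/
def msupport (μ : Measure V) : Set V := {x | ∀ U ∈ nhds x, μ U ≠ 0}

/-- Regular measures: absolutely continuous, compact convex support,
density bounded above and below on the support. -/
def IsP2reg {d : ℕ} (μ : Measure (EuclideanSpace ℝ (Fin d))) : Prop :=
  IsP2 μ ∧ μ ≪ volume ∧ IsCompact (msupport μ) ∧ Convex ℝ (msupport μ) ∧
    ∃ m M : ℝ, 0 < m ∧ 0 < M ∧
      ∀ᵐ x ∂(volume : Measure (EuclideanSpace ℝ (Fin d))),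
        x ∈ msupport μ → m ≤ (μ.rnDeriv volume x).toReal ∧ (μ.rnDeriv volume x).toReal ≤ M


/-!
In quantile coordinates everything takes place in the Hilbert space `L²(0, 1)`. Let `M`, `N`, `R` be the
quantile functions of `μ`, `ν` and of the forward projection. The monotone coupling is optimal, so `W₂` is the
`L²` distance of quantile functions (`norm_sub_le_W2`, `W2_map_le`).

Let `K` be the closed cone generated by monotone functions and `p` the projection of `M - N` onto `K`. The
claim is that `R = N + p` (`forwardProj_eq`). Convex order is dual to `K`: if `μ ⪯ law R` then `⟪M, g⟫ ≤ ⟪R, g⟫`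
for every `g ∈ K` (`inner_le_of_convexOrder`), and conversely these inequalities imply the convex order
(`convexOrder_of_inner_le`; here `R` need not be monotone). Since `⟪M - N - p, g⟫ ≤ 0` on `K`, the law of `N + p`
dominates `μ`, so minimality of `R` gives `‖R - N‖ ≤ ‖p‖`. On the other hand
`⟪R - N, p⟫ ≥ ⟪M - N, p⟫ = ‖p‖²`, and the two bounds force `R - N = p`.

As the projection onto `K` is nonexpansive,
`‖R - R'‖ ≤ ‖N - N'‖ + ‖(M - N) - (M' - N')‖ ≤ 2 ‖N - N'‖ + ‖M - M'‖`.

Optimality of the monotone coupling and the duality both come from one rearrangement inequality,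
`integral_mul_le_of_monotoneOn`, proved by a layer-cake decomposition.
-/

/-! ### Quantile functions -/

/-- Lebesgue measure on `(0, 1)`, on which quantile functions live. -/
abbrev unitLaw : Measure ℝ := volume.restrict (Set.Ioo (0 : ℝ) 1)

instance instProbUnitLaw : IsProbabilityMeasure unitLaw := ⟨by simp [unitLaw]⟩

/-- Every law on `ℝ` has a quantile function. -/
lemma exists_quantile (μ : Measure ℝ) [IsProbabilityMeasure μ] :
    ∃ Q : ℝ → ℝ, MonotoneOn Q (Set.Ioo 0 1) ∧ unitLaw.map Q = μ := by
  set F := ProbabilityTheory.cdf μ with hF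
  let Q : ℝ → ℝ := fun u => sInf {x | u ≤ F x}
  have hbdd : ∀ u ∈ Set.Ioo (0 : ℝ) 1, BddBelow {x | u ≤ F x} := by
    intro u hu
    obtain ⟨a, ha⟩ := ((ProbabilityTheory.tendsto_cdf_atBot μ).eventually (gt_mem_nhds hu.1)).exists
    refine ⟨a, fun x hx => ?_⟩
    by_contra! h
    exact absurd (F.mono h.le) (not_le.2 (ha.trans_le hx))
  have hne : ∀ u ∈ Set.Ioo (0 : ℝ) 1, {x | u ≤ F x}.Nonempty := by
    intro u hu
    obtain ⟨a, ha⟩ := ((ProbabilityTheory.tendsto_cdf_atTop μ).eventually (lt_mem_nhds hu.2)).exists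
    exact ⟨a, ha.le⟩
  have galois : ∀ u ∈ Set.Ioo (0 : ℝ) 1, ∀ x, Q u ≤ x ↔ u ≤ F x := by
    intro u hu x
    refine ⟨fun h => ?_, fun h => csInf_le (hbdd u hu) h⟩
    have hr : ∀ y > x, u ≤ F y := by
      intro y hy
      obtain ⟨z, hz, hzy⟩ := exists_lt_of_csInf_lt (hne u hu) (h.trans_lt hy)
      exact le_trans hz (F.mono hzy.le)
    have hc : Filter.Tendsto F (nhdsWithin x (Set.Ioi x)) (nhds (F x)) :=
      (F.right_continuous x).mono_left (nhdsWithin_mono _ Set.Ioi_subset_Ici_self)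
    exact ge_of_tendsto hc (Filter.eventually_of_mem self_mem_nhdsWithin hr)
  have hmono : MonotoneOn Q (Set.Ioo 0 1) := fun u hu v hv huv =>
    (galois u hu _).2 (huv.trans ((galois v hv _).1 le_rfl))
  refine ⟨Q, hmono, ?_⟩
  have hQm : AEMeasurable Q unitLaw := aemeasurable_restrict_of_monotoneOn measurableSet_Ioo hmono
  have : IsProbabilityMeasure (unitLaw.map Q) := Measure.isProbabilityMeasure_map hQm
  refine Measure.ext_of_Iic _ _ fun a => ?_
  rw [Measure.map_apply_of_aemeasurable hQm measurableSet_Iic]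
  have h1 : unitLaw (Q ⁻¹' Set.Iic a) = unitLaw (Set.Iic (F a)) := by
    refine measure_congr ?_
    filter_upwards [ae_restrict_mem measurableSet_Ioo] with u hu
    exact propext (galois u hu a)
  rw [h1, ← ProbabilityTheory.ofReal_cdf μ, ← hF, Measure.restrict_apply measurableSet_Iic]
  rcases eq_or_lt_of_le (ProbabilityTheory.cdf_le_one μ a) with h | h
  · have : Set.Iic (F a) ∩ Set.Ioo 0 1 = Set.Ioo 0 1 :=
      Set.inter_eq_right.2 fun x hx => by
        change x ≤ F a
        rw [hF, h]; exact hx.2.le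
    rw [this, hF, h]; simp
  · have : Set.Iic (F a) ∩ Set.Ioo 0 1 = Set.Ioc 0 (F a) := by
      ext x
      simp only [Set.mem_inter_iff, Set.mem_Iic, Set.mem_Ioo, Set.mem_Ioc]
      exact ⟨fun h' => ⟨h'.2.1, h'.1⟩, fun h' => ⟨h'.2, h'.1, h'.2.trans_lt h⟩⟩
    rw [this]; simp

/-! ### The rearrangement inequality -/

/-- The signed kernel `1_{s < y} - 1_{s < 0}`, whose integral over `s` is `y`. -/
def layer (y s : ℝ) : ℝ := (if s < y then 1 else 0) - (if s < 0 then 1 else 0)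

lemma layer_eq_indicator (y : ℝ) :
    layer y = (Set.Ico 0 y).indicator 1 - (Set.Ico y 0).indicator 1 := by
  ext s
  simp only [layer, Pi.sub_apply, Set.indicator, Set.mem_Ico, Pi.one_apply]
  split_ifs <;> first | (exfalso; grind) | simp

lemma norm_layer (y : ℝ) :
    (fun s => ‖layer y s‖) = (Set.Ico 0 y).indicator 1 + (Set.Ico y 0).indicator 1 := by
  ext s
  simp only [layer, Pi.add_apply, Set.indicator, Set.mem_Ico, Pi.one_apply]
  split_ifs <;> first | (exfalso; grind) | simp

lemma integrable_ind (a b : ℝ) : Integrable ((Set.Ico a b).indicator (1 : ℝ → ℝ)) :=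
  (integrable_indicator_iff measurableSet_Ico).2 (by
    simp [Pi.one_def])

lemma integral_ind (a b : ℝ) : ∫ s, (Set.Ico a b).indicator (1 : ℝ → ℝ) s = max (b - a) 0 := by
  rw [integral_indicator_one measurableSet_Ico]
  simp [Measure.real, ENNReal.toReal_ofReal']

lemma integrable_layer (y : ℝ) : Integrable (layer y) := by
  rw [layer_eq_indicator]; exact (integrable_ind _ _).sub (integrable_ind _ _)

lemma integral_layer (y : ℝ) : ∫ s, layer y s = y := by
  rw [layer_eq_indicator, integral_sub' (integrable_ind _ _) (integrable_ind _ _), integral_ind, integral_ind]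
  rcases le_total y 0 with h | h <;> simp [h]

lemma integral_norm_layer (y : ℝ) : ∫ s, ‖layer y s‖ = |y| := by
  rw [norm_layer, integral_add' (integrable_ind _ _) (integrable_ind _ _), integral_ind, integral_ind]
  rcases le_total y 0 with h | h <;> simp [h, abs_of_nonpos, abs_of_nonneg]

section
variable {Ω : Type*} [MeasurableSpace Ω] {P : Measure Ω} [IsProbabilityMeasure P]

lemma integrable_mul_layer {X Y : Ω → ℝ} (hX : MemLp X 2 P) (hY : MemLp Y 2 P) :
    Integrable (fun p : Ω × ℝ => X p.1 * layer (Y p.1) p.2) (P.prod volume) := by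
  have hYm : AEMeasurable (fun p : Ω × ℝ => Y p.1) (P.prod volume) :=
    (hY.1.comp_fst (ν := (volume : Measure ℝ))).aemeasurable
  have hm : AEStronglyMeasurable (fun p : Ω × ℝ => layer (Y p.1) p.2) (P.prod volume) := by
    have h1 : AEStronglyMeasurable
        ({p : Ω × ℝ | p.2 < Y p.1}.indicator (fun _ => (1 : ℝ))) (P.prod volume) :=
      aestronglyMeasurable_const.indicator₀ (nullMeasurableSet_lt measurable_snd.aemeasurable hYm)
    have h2 : AEStronglyMeasurable
        ({p : Ω × ℝ | p.2 < 0}.indicator (fun _ => (1 : ℝ))) (P.prod volume) :=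
      aestronglyMeasurable_const.indicator
        (measurableSet_lt measurable_snd measurable_const)
    exact h1.sub h2
  refine (integrable_prod_iff ((hX.1.comp_fst).mul hm)).2
    ⟨.of_forall fun ω => (integrable_layer (Y ω)).const_mul (X ω), ?_⟩
  have : (fun ω => ∫ s, ‖X ω * layer (Y ω) s‖) = fun ω => ‖(X * Y) ω‖ := by
    ext ω
    simp only [norm_mul, integral_const_mul, integral_norm_layer, Pi.mul_apply]
    simp
  change Integrable (fun ω => ∫ s, ‖X ω * layer (Y ω) s‖) P
  rw [this]
  exact (hX.integrable_mul hY).norm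

lemma integral_mul_eq_layer {X Y : Ω → ℝ} (hX : MemLp X 2 P) (hY : MemLp Y 2 P) :
    ∫ ω, X ω * Y ω ∂P = ∫ s, ∫ ω, X ω * layer (Y ω) s ∂P := by
  rw [← integral_integral_swap (f := fun ω s => X ω * layer (Y ω) s)
    (integrable_mul_layer hX hY)]
  simp only [integral_const_mul, integral_layer]

/-- The level-set case of `integral_mul_le_of_monotoneOn`. With `k = inf R` on the level set of `T`, monotonicity of
`R` gives `(R - k)⁺ = (R - k) 1_{s < T}`. -/
lemma setIntegral_le_of_monotoneOn {X Y : Ω → ℝ} {R T : ℝ → ℝ}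
    (hR : MonotoneOn R (Set.Ioo 0 1)) (hT : MonotoneOn T (Set.Ioo 0 1))
    (hX : Integrable X P) (hY : AEMeasurable Y P) (hR1 : Integrable R unitLaw)
    (hlaw : P.map Y = unitLaw.map T) (hmean : ∫ ω, X ω ∂P = ∫ u, R u ∂unitLaw)
    (hpos : ∀ k, ∫ ω, max (X ω - k) 0 ∂P ≤ ∫ u, max (R u - k) 0 ∂unitLaw) (s : ℝ) :
    ∫ ω in {ω | s < Y ω}, X ω ∂P ≤ ∫ u in {u | s < T u}, R u ∂unitLaw := by
  have hTm : AEMeasurable T unitLaw := aemeasurable_restrict_of_monotoneOn measurableSet_Ioo hT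
  have hB : NullMeasurableSet {ω | s < Y ω} P := nullMeasurableSet_lt aemeasurable_const hY
  have hA : NullMeasurableSet {u | s < T u} unitLaw := nullMeasurableSet_lt aemeasurable_const hTm
  have hmeas : P {ω | s < Y ω} = unitLaw {u | s < T u} := by
    have := congrArg (fun m : Measure ℝ => m (Set.Ioi s)) hlaw
    beta_reduce at this
    rwa [Measure.map_apply_of_aemeasurable hY measurableSet_Ioi,
      Measure.map_apply_of_aemeasurable hTm measurableSet_Ioi] at this
  by_cases hall : ∀ u ∈ Set.Ioo (0 : ℝ) 1, s < T u
  · have h1 : {u | s < T u} =ᵐ[unitLaw] Set.univ := by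
      refine Filter.eventuallyEq_univ.2 ?_
      filter_upwards [ae_restrict_mem measurableSet_Ioo] with u hu using hall u hu
    have h2 : {ω | s < Y ω} =ᵐ[P] Set.univ := by
      refine Filter.eventuallyEq_univ.2 ?_
      rw [mem_ae_iff_prob_eq_one₀ hB, hmeas, measure_congr h1]; simp
    rw [setIntegral_congr_set h1, setIntegral_congr_set h2]
    simp [hmean]
  by_cases hnone : ∀ u ∈ Set.Ioo (0 : ℝ) 1, ¬ s < T u
  · have h1 : unitLaw {u | s < T u} = 0 := by
      rw [measure_eq_zero_iff_ae_notMem]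
      filter_upwards [ae_restrict_mem measurableSet_Ioo] with u hu using hnone u hu
    rw [setIntegral_measure_zero _ h1, setIntegral_measure_zero _ (hmeas.trans h1)]
  push Not at hall hnone
  obtain ⟨a, ha, haT⟩ := hall
  obtain ⟨b, hb, hbT⟩ := hnone
  set A := {u | u ∈ Set.Ioo (0 : ℝ) 1 ∧ s < T u} with hAdef
  have hsep : ∀ u ∈ Set.Ioo (0 : ℝ) 1, ¬ s < T u → ∀ v ∈ A, R u ≤ R v := by
    intro u hu hus v hv
    refine hR hu hv.1 ?_
    by_contra! h
    exact hus (hv.2.trans_le (hT hv.1 hu h.le))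
  set k := sInf (R '' A) with hk
  have hne : (R '' A).Nonempty := ⟨R b, b, ⟨hb, hbT⟩, rfl⟩
  have hbd : BddBelow (R '' A) := ⟨R a, by
    rintro _ ⟨v, hv, rfl⟩; exact hsep a ha (not_lt.2 haT) v hv⟩
  have hpt : (fun u => max (R u - k) 0) =ᵐ[unitLaw]
      {u | s < T u}.indicator (fun u => R u - k) := by
    filter_upwards [ae_restrict_mem measurableSet_Ioo] with u hu
    by_cases h : s < T u
    · rw [Set.indicator_of_mem (by exact h)]
      exact max_eq_left (sub_nonneg.2 (csInf_le hbd ⟨u, ⟨hu, h⟩, rfl⟩))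
    · rw [Set.indicator_of_notMem (by exact h)]
      refine max_eq_right (sub_nonpos.2 (le_csInf hne ?_))
      rintro _ ⟨v, hv, rfl⟩; exact hsep u hu h v hv
  have hXk : Integrable (fun ω => X ω - k) P := hX.sub (integrable_const k)
  have hRk : Integrable (fun u => R u - k) unitLaw := hR1.sub (integrable_const k)
  have e1 : ∫ ω in {ω | s < Y ω}, (X ω - k) ∂P ≤ ∫ ω, max (X ω - k) 0 ∂P := by
    calc _ ≤ ∫ ω in {ω | s < Y ω}, max (X ω - k) 0 ∂P :=
          integral_mono hXk.integrableOn hXk.pos_part.integrableOn fun ω => le_max_left _ _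
      _ ≤ _ := setIntegral_le_integral hXk.pos_part (.of_forall fun ω => le_max_right _ _)
  have e2 : ∫ u, max (R u - k) 0 ∂unitLaw = ∫ u in {u | s < T u}, (R u - k) ∂unitLaw := by
    rw [integral_congr_ae hpt, integral_indicator₀ hA]
  have e3 := e1.trans ((hpos k).trans_eq e2)
  rw [integral_sub hX.integrableOn (integrable_const k),
    integral_sub hR1.integrableOn (integrable_const k)] at e3
  simp only [integral_const, Measure.real, Measure.restrict_apply_univ] at e3
  rw [hmeas] at e3
  linarith

lemma integral_mul_layer {X Y : Ω → ℝ} (hX : Integrable X P) (hY : AEMeasurable Y P) (s : ℝ) :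
    ∫ ω, X ω * layer (Y ω) s ∂P =
      ∫ ω in {ω | s < Y ω}, X ω ∂P - (∫ ω, X ω ∂P) * (if s < 0 then 1 else 0) := by
  have hB : NullMeasurableSet {ω | s < Y ω} P := nullMeasurableSet_lt aemeasurable_const hY
  rw [← integral_indicator₀ hB, ← integral_mul_const,
    ← integral_sub (hX.indicator₀ hB) (hX.mul_const _)]
  refine integral_congr_ae (.of_forall fun ω => ?_)
  simp only [layer, Set.indicator, Set.mem_ofPred_eq]
  split_ifs <;> ring

/-- Rearrangement inequality: if `X` is below `R` in convex order, `Y` has the law of `T`, and `R`, `T` are monotone,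
then `E[X Y] ≤ ∫ R T`. -/
lemma integral_mul_le_of_monotoneOn {X Y : Ω → ℝ} {R T : ℝ → ℝ}
    (hR : MonotoneOn R (Set.Ioo 0 1)) (hT : MonotoneOn T (Set.Ioo 0 1))
    (hX : MemLp X 2 P) (hY : MemLp Y 2 P) (hR2 : MemLp R 2 unitLaw) (hT2 : MemLp T 2 unitLaw)
    (hlaw : P.map Y = unitLaw.map T) (hmean : ∫ ω, X ω ∂P = ∫ u, R u ∂unitLaw)
    (hpos : ∀ k, ∫ ω, max (X ω - k) 0 ∂P ≤ ∫ u, max (R u - k) 0 ∂unitLaw) :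
    ∫ ω, X ω * Y ω ∂P ≤ ∫ u, R u * T u ∂unitLaw := by
  have hX1 : Integrable X P := hX.integrable (by norm_num)
  have hR1 : Integrable R unitLaw := hR2.integrable (by norm_num)
  rw [integral_mul_eq_layer hX hY, integral_mul_eq_layer hR2 hT2]
  refine integral_mono (integrable_mul_layer hX hY).integral_prod_right
    (integrable_mul_layer hR2 hT2).integral_prod_right fun s => ?_
  simp only []
  rw [integral_mul_layer hX1 hY.1.aemeasurable, integral_mul_layer hR1 hT2.1.aemeasurable, hmean]
  gcongr
  exact setIntegral_le_of_monotoneOn hR hT hX1 hY.1.aemeasurable hR1 hlaw hmean hpos s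

end

/-! ### Wasserstein distance and convex order in quantile coordinates -/

/-- The quantile Hilbert space `L²(0, 1)`. -/
abbrev QSpace := Lp ℝ 2 unitLaw

/-- Elements of `L²(0, 1)` having a representative that is nondecreasing on `(0, 1)`. -/
def monoCone : Set QSpace := {f | ∃ Q : ℝ → ℝ, MonotoneOn Q (Set.Ioo 0 1) ∧ f =ᵐ[unitLaw] Q}

lemma aemeas (f : QSpace) : AEMeasurable f unitLaw := (Lp.aestronglyMeasurable f).aemeasurable

lemma inner_eq (f g : QSpace) : inner ℝ f g = ∫ u, f u * g u ∂unitLaw := by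
  rw [L2.inner_def]
  exact integral_congr_ae (.of_forall fun u => by simp [mul_comm])

lemma norm_sub_sq_eq (f g : QSpace) : ‖f - g‖ ^ 2 = ∫ u, ‖f u - g u‖ ^ 2 ∂unitLaw := by
  rw [← real_inner_self_eq_norm_sq, inner_eq]
  refine integral_congr_ae ?_
  filter_upwards [Lp.coeFn_sub f g] with u hu
  rw [hu, Pi.sub_apply, Real.norm_eq_abs, sq_abs, sq]

lemma memLp_id_of_isP2 {μ : Measure ℝ} (hμ : IsP2 μ) : MemLp (fun x : ℝ => x) 2 μ := by
  refine (memLp_two_iff_integrable_sq aestronglyMeasurable_id).2 ?_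
  simpa using hμ.2

lemma exists_mem_monoCone {μ : Measure ℝ} (hμ : IsP2 μ) :
    ∃ M ∈ monoCone, unitLaw.map M = μ := by
  have := hμ.1
  obtain ⟨Q, hQ, rfl⟩ := exists_quantile μ
  have hQm : AEMeasurable Q unitLaw := aemeasurable_restrict_of_monotoneOn measurableSet_Ioo hQ
  have hL : MemLp Q 2 unitLaw := by
    have h := memLp_id_of_isP2 hμ
    exact (memLp_map_measure_iff aestronglyMeasurable_id hQm).1 h
  exact ⟨hL.toLp Q, ⟨Q, hQ, hL.coeFn_toLp⟩, Measure.map_congr hL.coeFn_toLp⟩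

lemma isP2_map (f : QSpace) : IsP2 (unitLaw.map f) := by
  refine ⟨Measure.isProbabilityMeasure_map (aemeas f), ?_⟩
  have h : MemLp (fun x : ℝ => x) 2 (unitLaw.map f) :=
    (memLp_map_measure_iff aestronglyMeasurable_id (aemeas f)).2 (Lp.memLp f)
  simpa using (memLp_two_iff_integrable_sq aestronglyMeasurable_id).1 h

lemma W2sq_bddBelow (μ ν : Measure ℝ) : BddBelow
    {c : ℝ | ∃ π : Measure (ℝ × ℝ), IsCoupling π μ ν ∧ c = ∫ p, ‖p.1 - p.2‖ ^ 2 ∂π} :=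
  ⟨0, by rintro _ ⟨π, -, rfl⟩; exact integral_nonneg fun p => by positivity⟩

lemma map_pair_mem (f g : QSpace) : ‖f - g‖ ^ 2 ∈ {c : ℝ | ∃ π : Measure (ℝ × ℝ),
    IsCoupling π (unitLaw.map f) (unitLaw.map g) ∧ c = ∫ p, ‖p.1 - p.2‖ ^ 2 ∂π} := by
  have hfg : AEMeasurable (fun u => (f u, g u)) unitLaw := (aemeas f).prodMk (aemeas g)
  refine ⟨unitLaw.map fun u => (f u, g u), ⟨Measure.isProbabilityMeasure_map hfg, ?_, ?_⟩, ?_⟩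
  · rw [AEMeasurable.map_map_of_aemeasurable measurable_fst.aemeasurable hfg]; rfl
  · rw [AEMeasurable.map_map_of_aemeasurable measurable_snd.aemeasurable hfg]; rfl
  · rw [norm_sub_sq_eq, integral_map hfg (by fun_prop)]

lemma W2_map_le (f g : QSpace) : W2 (unitLaw.map f) (unitLaw.map g) ≤ ‖f - g‖ :=
  Real.sqrt_le_iff.2 ⟨norm_nonneg _, csInf_le (W2sq_bddBelow _ _) (map_pair_mem f g)⟩

/-- Optimality of the monotone coupling. -/
lemma norm_sub_le_W2 {f g : QSpace} (hf : f ∈ monoCone) (hg : g ∈ monoCone) :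
    ‖f - g‖ ≤ W2 (unitLaw.map f) (unitLaw.map g) := by
  refine Real.le_sqrt_of_sq_le (le_csInf ⟨_, map_pair_mem f g⟩ ?_)
  rintro _ ⟨π, ⟨hπ, h1, h2⟩, rfl⟩
  obtain ⟨Q, hQ, hfQ⟩ := hf
  obtain ⟨T, hT, hgT⟩ := hg
  have hX : MemLp (fun p : ℝ × ℝ => p.1) 2 π := by
    have h := memLp_id_of_isP2 (isP2_map f)
    rw [← h1] at h
    exact (memLp_map_measure_iff aestronglyMeasurable_id measurable_fst.aemeasurable).1 h
  have hY : MemLp (fun p : ℝ × ℝ => p.2) 2 π := by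
    have h := memLp_id_of_isP2 (isP2_map g)
    rw [← h2] at h
    exact (memLp_map_measure_iff aestronglyMeasurable_id measurable_snd.aemeasurable).1 h
  -- integrals against the marginals of `π`
  have int1 : ∀ F : ℝ → ℝ, Continuous F → ∫ p, F p.1 ∂π = ∫ u, F (f u) ∂unitLaw := by
    intro F hF
    rw [← integral_map (φ := f) (aemeas f) (f := F) hF.aestronglyMeasurable, ← h1,
      integral_map measurable_fst.aemeasurable hF.aestronglyMeasurable]
  have int2 : ∀ F : ℝ → ℝ, Continuous F → ∫ p, F p.2 ∂π = ∫ u, F (g u) ∂unitLaw := by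
    intro F hF
    rw [← integral_map (φ := g) (aemeas g) (f := F) hF.aestronglyMeasurable, ← h2,
      integral_map measurable_snd.aemeasurable hF.aestronglyMeasurable]
  have hcongr : ∀ F : ℝ → ℝ, ∫ u, F (f u) ∂unitLaw = ∫ u, F (Q u) ∂unitLaw := fun F =>
    integral_congr_ae (hfQ.mono fun u hu => by simp only [hu])
  have key : ∫ p, p.1 * p.2 ∂π ≤ inner ℝ f g := by
    have hmul : inner ℝ f g = ∫ u, Q u * T u ∂unitLaw := by
      rw [inner_eq]
      refine integral_congr_ae ?_
      filter_upwards [hfQ, hgT] with u hu hv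
      rw [hu, hv]
    rw [hmul]
    refine integral_mul_le_of_monotoneOn hQ hT hX hY ((memLp_congr_ae hfQ).1 (Lp.memLp f))
      ((memLp_congr_ae hgT).1 (Lp.memLp g)) (h2.trans (Measure.map_congr hgT)) ?_ fun k => ?_
    · rw [int1 (fun x => x) continuous_id, hcongr fun x => x]
    · rw [int1 (fun x => max (x - k) 0) (by fun_prop), hcongr fun x => max (x - k) 0]
  have hX2 : Integrable (fun p : ℝ × ℝ => p.1 ^ 2) π := hX.integrable_sq
  have hY2 : Integrable (fun p : ℝ × ℝ => p.2 ^ 2) π := hY.integrable_sq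
  have hXY : Integrable (fun p : ℝ × ℝ => 2 * (p.1 * p.2)) π := (hX.integrable_mul hY).const_mul 2
  have hexp : ∫ p, ‖p.1 - p.2‖ ^ 2 ∂π =
      ∫ p, p.1 ^ 2 ∂π - 2 * ∫ p, p.1 * p.2 ∂π + ∫ p, p.2 ^ 2 ∂π := by
    have hd : Integrable (fun p : ℝ × ℝ => p.1 ^ 2 - 2 * (p.1 * p.2)) π := hX2.sub hXY
    rw [← integral_const_mul, ← integral_sub hX2 hXY, ← integral_add hd hY2]
    refine integral_congr_ae (.of_forall fun p => ?_)
    simp only [Real.norm_eq_abs, sq_abs]; ring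
  have e1 : ∫ p, p.1 ^ 2 ∂π = ‖f‖ ^ 2 := by
    rw [int1 (fun x => x ^ 2) (by fun_prop), ← real_inner_self_eq_norm_sq, inner_eq]
    simp only [sq]
  have e2 : ∫ p, p.2 ^ 2 ∂π = ‖g‖ ^ 2 := by
    rw [int2 (fun x => x ^ 2) (by fun_prop), ← real_inner_self_eq_norm_sq, inner_eq]
    simp only [sq]
  rw [hexp, e1, e2, norm_sub_sq_real]
  linarith

/-- Convex order gives an inequality against every monotone function. The law of `R` is tested only through
`x`, `-x` and `(x - k)⁺`. -/
lemma inner_le_of_convexOrder {M R g : QSpace} (hR : R ∈ monoCone) (hg : g ∈ monoCone)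
    (h : ConvexOrder (unitLaw.map M) (unitLaw.map R)) : inner ℝ M g ≤ inner ℝ R g := by
  obtain ⟨Q, hQ, hRQ⟩ := hR
  obtain ⟨T, hT, hgT⟩ := hg
  have hid : ∀ f : QSpace, Integrable (fun x : ℝ => x) (unitLaw.map f) := fun f =>
    have := (isP2_map f).1
    (memLp_id_of_isP2 (isP2_map f)).integrable (by norm_num)
  have hcomp : ∀ F : ℝ → ℝ, ConvexOn ℝ Set.univ F → Continuous F →
      (∀ f : QSpace, Integrable F (unitLaw.map f)) →
      ∫ u, F (M u) ∂unitLaw ≤ ∫ u, F (Q u) ∂unitLaw := by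
    intro F hc hF hint
    have := h F hc (hint M) (hint R)
    rw [integral_map (aemeas M) hF.aestronglyMeasurable,
      integral_map (aemeas R) hF.aestronglyMeasurable] at this
    exact this.trans_eq (integral_congr_ae (hRQ.mono fun u hu => by simp only [hu]))
  have hmul : inner ℝ R g = ∫ u, Q u * T u ∂unitLaw := by
    rw [inner_eq]
    refine integral_congr_ae ?_
    filter_upwards [hRQ, hgT] with u hu hv
    rw [hu, hv]
  rw [hmul, inner_eq]
  refine integral_mul_le_of_monotoneOn hQ hT (Lp.memLp M) (Lp.memLp g)
    ((memLp_congr_ae hRQ).1 (Lp.memLp R)) ((memLp_congr_ae hgT).1 (Lp.memLp g))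
    (Measure.map_congr hgT) (le_antisymm ?_ ?_) fun k => ?_
  · exact hcomp (fun x => x) (convexOn_id convex_univ) continuous_id hid
  · have := hcomp (fun x => -x) (concaveOn_id convex_univ).neg (by fun_prop) fun f => (hid f).neg
    rw [integral_neg, integral_neg] at this
    linarith
  · refine hcomp (fun x => max (x - k) 0) ?_ (by fun_prop) fun f => ?_
    · have hk : ConvexOn ℝ Set.univ fun x : ℝ => x - k := by
        exact (convexOn_id convex_univ).add_const (-k)
      exact hk.sup (convexOn_const 0 convex_univ)
    · have := (isP2_map f).1
      exact ((hid f).sub (integrable_const k)).pos_part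

lemma exists_subgradient {φ : ℝ → ℝ} (hφ : ConvexOn ℝ Set.univ φ) :
    ∃ d : ℝ → ℝ, Monotone d ∧ ∀ x y, φ x + d x * (y - x) ≤ φ y := by
  refine ⟨fun x => derivWithin φ (Set.Ioi x) x, fun x y hxy => ?_, fun x y => ?_⟩
  · exact hφ.monotoneOn_rightDeriv (by simp) (by simp) hxy
  rcases lt_trichotomy x y with h | rfl | h
  · have := hφ.rightDeriv_le_slope_of_mem_interior (x := x) (y := y) (by simp) (by simp) h
    rw [slope_def_field, le_div_iff₀ (sub_pos.2 h)] at this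
    linarith
  · simp
  · have h1 := hφ.slope_le_leftDeriv_of_mem_interior (x := y) (y := x) (by simp) (by simp) h
    have h2 := hφ.leftDeriv_le_rightDeriv_of_mem_interior (x := x) (by simp)
    have h3 := h1.trans h2
    rw [slope_def_field, div_le_iff₀ (sub_pos.2 h)] at h3
    linarith

/-- Testing against monotone functions suffices for the convex order: with `c` the truncation to `[-n, n]` and
`d` a subgradient of `φ`, the bounded monotone function `d ∘ c ∘ M` gives the inequality for the convex function
that replaces `φ` by its tangents outside `[-n, n]`; then `n → ∞`. -/
lemma convexOrder_of_inner_le {M R : QSpace} (hM : M ∈ monoCone)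
    (h : ∀ g ∈ monoCone, inner ℝ M g ≤ inner ℝ R g) :
    ConvexOrder (unitLaw.map M) (unitLaw.map R) := by
  intro φ hφ hiM hiR
  have hφc : Continuous φ := continuousOn_univ.1 (hφ.continuousOn isOpen_univ)
  rw [integral_map (aemeas M) hφc.aestronglyMeasurable,
    integral_map (aemeas R) hφc.aestronglyMeasurable]
  replace hiM : Integrable (fun u => φ (M u)) unitLaw :=
    (integrable_map_measure hφc.aestronglyMeasurable (aemeas M)).1 hiM
  replace hiR : Integrable (fun u => φ (R u)) unitLaw :=
    (integrable_map_measure hφc.aestronglyMeasurable (aemeas R)).1 hiR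
  obtain ⟨d, hd, htan⟩ := exists_subgradient hφ
  obtain ⟨Q, hQ, hMQ⟩ := hM
  let c : ℕ → ℝ → ℝ := fun n x => max (-n : ℝ) (min n x)
  have hc : ∀ n, Monotone (c n) := fun n x y hxy => by dsimp only [c]; gcongr
  have hcc : ∀ n, Continuous (c n) := fun n => by dsimp only [c]; fun_prop
  have hcl : ∀ (n : ℕ) (x : ℝ), -(n : ℝ) ≤ c n x := fun n x => le_max_left _ _
  have hcu : ∀ (n : ℕ) (x : ℝ), c n x ≤ n := fun n x =>
    max_le (by linarith [n.cast_nonneg (α := ℝ)]) (min_le_left _ _)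
  let ψ : ℕ → ℝ → ℝ := fun n x => φ (c n x) + d (c n x) * (x - c n x)
  have hψm : ∀ n, Measurable (ψ n) := fun n =>
    (hφc.comp (hcc n)).measurable.add
      ((hd.measurable.comp (hcc n).measurable).mul (measurable_id.sub (hcc n).measurable))
  have hψu : ∀ n x, ψ n x ≤ φ x := fun n x => htan _ _
  have hψl : ∀ n x, φ 0 + d 0 * x ≤ ψ n x := by
    intro n x
    have h1 := htan 0 (c n x)
    have h2 : 0 ≤ (d (c n x) - d 0) * (x - c n x) := by
      have hn : (0 : ℝ) ≤ n := n.cast_nonneg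
      rcases le_total 0 x with hx | hx
      · have hc0 : 0 ≤ c n x := le_max_of_le_right (le_min hn hx)
        have hcx : c n x ≤ x := max_le (by linarith) (min_le_right _ _)
        exact mul_nonneg (sub_nonneg.2 (hd hc0)) (sub_nonneg.2 hcx)
      · have hc0 : c n x ≤ 0 := max_le (by linarith) ((min_le_right _ _).trans hx)
        have hcx : x ≤ c n x := le_max_of_le_right (le_min (by linarith) le_rfl)
        exact mul_nonneg_of_nonpos_of_nonpos (sub_nonpos.2 (hd hc0)) (sub_nonpos.2 hcx)
    dsimp only [ψ]
    nlinarith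
  have hM1 : Integrable M unitLaw := (Lp.memLp M).integrable (by norm_num)
  have hR1 : Integrable R unitLaw := (Lp.memLp R).integrable (by norm_num)
  let b : ℝ → ℝ := fun u => |φ (M u)| + (|φ 0| + |d 0| * |M u|)
  have hb : Integrable b unitLaw :=
    hiM.abs.add ((integrable_const _).add (hM1.abs.const_mul _))
  have hψb : ∀ n u, ‖ψ n (M u)‖ ≤ b u := by
    intro n u
    have h1 := hψu n (M u)
    have h2 := hψl n (M u)
    have h3 := neg_abs_le (d 0 * M u)
    rw [abs_mul] at h3
    have h4 := neg_abs_le (φ 0)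
    have h5 := le_abs_self (φ (M u))
    have h6 : 0 ≤ |d 0| * |M u| := by positivity
    rw [Real.norm_eq_abs, abs_le]
    dsimp only [b]
    constructor <;> linarith [abs_nonneg (φ 0), abs_nonneg (φ (M u))]
  have hψM : ∀ n, AEStronglyMeasurable (fun u => ψ n (M u)) unitLaw := fun n =>
    ((hψm n).comp_aemeasurable (aemeas M)).aestronglyMeasurable
  have hstep : ∀ n, ∫ u, ψ n (M u) ∂unitLaw ≤ ∫ u, φ (R u) ∂unitLaw := by
    intro n
    have hgm : MonotoneOn (fun u => d (c n (Q u))) (Set.Ioo 0 1) := fun u hu v hv huv =>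
      hd (hc n (hQ hu hv huv))
    have hgL : MemLp (fun u => d (c n (Q u))) 2 unitLaw := by
      refine MemLp.of_bound
        (aemeasurable_restrict_of_monotoneOn measurableSet_Ioo hgm).aestronglyMeasurable
        (max |d (-n)| |d n|) (.of_forall fun u => ?_)
      exact abs_le_max_abs_abs (hd (hcl n _)) (hd (hcu n _))
    have hin := h _ (⟨_, hgm, hgL.coeFn_toLp⟩ : hgL.toLp _ ∈ monoCone)
    have hgM : hgL.toLp _ =ᵐ[unitLaw] fun u => d (c n (M u)) :=
      hgL.coeFn_toLp.trans (hMQ.mono fun u hu => by simp only [hu])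
    have hgM2 : MemLp (fun u => d (c n (M u))) 2 unitLaw := (memLp_congr_ae hgM).1 (Lp.memLp _)
    have hMg : Integrable (fun u => M u * d (c n (M u))) unitLaw :=
      (Lp.memLp M).integrable_mul hgM2
    have hRg : Integrable (fun u => R u * d (c n (M u))) unitLaw :=
      (Lp.memLp R).integrable_mul hgM2
    have hcongr : ∀ f : QSpace, inner ℝ f (hgL.toLp _) = ∫ u, f u * d (c n (M u)) ∂unitLaw := by
      intro f
      rw [inner_eq]
      exact integral_congr_ae (hgM.mono fun u hu => by simp only [hu])
    rw [hcongr, hcongr] at hin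
    have hψi : Integrable (fun u => ψ n (M u)) unitLaw :=
      hb.mono' (hψM n) (.of_forall (hψb n))
    have hsum : ∫ u, (ψ n (M u) + (R u * d (c n (M u)) - M u * d (c n (M u)))) ∂unitLaw
        ≤ ∫ u, φ (R u) ∂unitLaw := by
      refine integral_mono (hψi.add (hRg.sub hMg)) hiR fun u => ?_
      have := htan (c n (M u)) (R u)
      dsimp only [ψ]
      linarith
    have hdiff : Integrable (fun u => R u * d (c n (M u)) - M u * d (c n (M u))) unitLaw :=
      hRg.sub hMg
    rw [integral_add hψi hdiff, integral_sub hRg hMg] at hsum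
    linarith
  refine le_of_tendsto' (tendsto_integral_of_dominated_convergence b hψM hb
    (fun n => .of_forall (hψb n)) (.of_forall fun u => ?_)) hstep
  obtain ⟨N, hN⟩ := exists_nat_ge |M u|
  refine tendsto_const_nhds.congr' ?_
  filter_upwards [Filter.eventually_ge_atTop N] with n hn
  have hle : |M u| ≤ n := hN.trans (by exact_mod_cast hn)
  have hcM : c n (M u) = M u := by
    dsimp only [c]
    rw [min_eq_right (abs_le.1 hle).2, max_eq_right (abs_le.1 hle).1]
  simp [ψ, hcM]

/-! ### Isotonic projection -/

lemma zero_mem_monoCone : (0 : QSpace) ∈ monoCone :=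
  ⟨0, fun _ _ _ _ _ => le_rfl, Lp.coeFn_zero _ _ _⟩

lemma add_mem_monoCone {f g : QSpace} (hf : f ∈ monoCone) (hg : g ∈ monoCone) :
    f + g ∈ monoCone := by
  obtain ⟨Q, hQ, hfQ⟩ := hf
  obtain ⟨T, hT, hgT⟩ := hg
  exact ⟨Q + T, hQ.add hT, (Lp.coeFn_add f g).trans (hfQ.add hgT)⟩

lemma smul_mem_monoCone {f : QSpace} (hf : f ∈ monoCone) {a : ℝ} (ha : 0 ≤ a) :
    a • f ∈ monoCone := by
  obtain ⟨Q, hQ, hfQ⟩ := hf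
  refine ⟨fun u => a * Q u, fun u hu v hv huv => ?_, ?_⟩
  · exact mul_le_mul_of_nonneg_left (hQ hu hv huv) ha
  · filter_upwards [Lp.coeFn_smul a f, hfQ] with u hu hv
    rw [hu, Pi.smul_apply, hv, smul_eq_mul]

lemma convex_monoCone : Convex ℝ monoCone := fun _ hf _ hg _ _ ha hb _ =>
  add_mem_monoCone (smul_mem_monoCone hf ha) (smul_mem_monoCone hg hb)

/-- Projection onto the closure of the cone of monotone functions (isotonic regression). -/
lemma exists_isotonic (D : QSpace) : ∃ p ∈ closure monoCone,
    inner ℝ (D - p) p = 0 ∧ ∀ g ∈ closure monoCone, inner ℝ (D - p) g ≤ 0 := by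
  have hconv := convex_monoCone.closure
  obtain ⟨p, hp, hmin⟩ := exists_norm_eq_iInf_of_complete_convex
    ⟨0, subset_closure zero_mem_monoCone⟩ isClosed_closure.isComplete hconv D
  have hvar := (norm_eq_iInf_iff_real_inner_le_zero hconv hp).1 hmin
  have h0 := hvar 0 (subset_closure zero_mem_monoCone)
  have hadd : ∀ g ∈ closure monoCone, p + g ∈ closure monoCone := fun g hg =>
    map_mem_closure₂ continuous_add hp hg fun _ ha _ hb => add_mem_monoCone ha hb
  have h2 := hvar (p + p) (hadd p hp)
  refine ⟨p, hp, ?_, fun g hg => ?_⟩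
  · rw [add_sub_cancel_right] at h2
    rw [zero_sub, inner_neg_right] at h0
    linarith
  · simpa using hvar (p + g) (hadd g hg)

lemma isotonic_nonexpansive {D D' p p' : QSpace} (hp : p ∈ closure monoCone)
    (hp' : p' ∈ closure monoCone) (h0 : inner ℝ (D - p) p = 0)
    (h : ∀ g ∈ closure monoCone, inner ℝ (D - p) g ≤ 0) (h0' : inner ℝ (D' - p') p' = 0)
    (h' : ∀ g ∈ closure monoCone, inner ℝ (D' - p') g ≤ 0) : ‖p - p'‖ ≤ ‖D - D'‖ := by
  have h1 := h p' hp'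
  have h2 := h' p hp
  have h3 : ‖p - p'‖ * ‖p - p'‖ ≤ inner ℝ (D - D') (p - p') := by
    rw [← real_inner_self_eq_norm_mul_norm]
    simp only [inner_sub_left, inner_sub_right] at *
    linarith [real_inner_comm p p']
  have h4 := h3.trans (real_inner_le_norm _ _)
  rcases (norm_nonneg (p - p')).eq_or_lt with h5 | h5
  · rw [← h5]; exact norm_nonneg _
  · exact le_of_mul_le_mul_right h4 h5

/-- In quantile coordinates the forward projection of `N` above `M` is `N + p`, where `p` is the isotonic
projection of `M - N`. -/
lemma forwardProj_eq {M N R p : QSpace} (hM : M ∈ monoCone) (hN : N ∈ monoCone)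
    (hR : R ∈ monoCone) (hp : p ∈ closure monoCone) (h0 : inner ℝ (M - N - p) p = 0)
    (h : ∀ g ∈ closure monoCone, inner ℝ (M - N - p) g ≤ 0)
    (hproj : IsForwardProj (unitLaw.map M) (unitLaw.map N) (unitLaw.map R)) : R = N + p := by
  obtain ⟨-, hord, hmin⟩ := hproj
  -- `N + p` is a competitor, so `R` is at most as far from `N`
  have hcomp : ConvexOrder (unitLaw.map M) (unitLaw.map (N + p : QSpace)) := by
    refine convexOrder_of_inner_le hM fun g hg => ?_
    have := h g (subset_closure hg)
    simp only [inner_sub_left, inner_add_left] at *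
    linarith
  have hle : ‖R - N‖ ≤ ‖p‖ := by
    calc ‖R - N‖ ≤ W2 (unitLaw.map R) (unitLaw.map N) := norm_sub_le_W2 hR hN
      _ ≤ W2 (unitLaw.map (N + p : QSpace)) (unitLaw.map N) := hmin _ (isP2_map _) hcomp
      _ ≤ ‖N + p - N‖ := W2_map_le _ _
      _ = ‖p‖ := by rw [add_sub_cancel_left]
  -- the convex order forces `R - N` to have at least as large a component along `p`
  have hin : inner ℝ M p ≤ inner ℝ R p := by
    have hclosed : IsClosed {g : QSpace | inner ℝ M g ≤ inner ℝ R g} :=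
      isClosed_le (by fun_prop) (by fun_prop)
    exact closure_minimal (fun g hg => inner_le_of_convexOrder hR hg hord) hclosed hp
  have hlow : ‖p‖ ^ 2 ≤ inner ℝ (R - N) p := by
    rw [← real_inner_self_eq_norm_sq]
    simp only [inner_sub_left] at *
    linarith
  have hzero : ‖R - N - p‖ ^ 2 ≤ 0 := by
    rw [norm_sub_sq_real]
    nlinarith [norm_nonneg (R - N), norm_nonneg p]
  have : R - N - p = 0 := by
    rw [← norm_eq_zero]
    exact pow_eq_zero_iff two_ne_zero |>.1 (le_antisymm hzero (sq_nonneg _))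
  rw [sub_sub, sub_eq_zero] at this
  exact this

/-- Lipschitz stability of the forward projection in one dimension. -/
theorem stmt9 (μ μ' ν ν' ρs ρs' : Measure ℝ)
    (hμ : IsP2 μ) (hμ' : IsP2 μ') (hν : IsP2 ν) (hν' : IsP2 ν')
    (hνac : ν ≪ (volume : Measure ℝ)) (hν'ac : ν' ≪ (volume : Measure ℝ))
    (hρs : IsForwardProj μ ν ρs) (hρs' : IsForwardProj μ' ν' ρs') :
    W2 ρs ρs' ≤ 2 * W2 ν ν' + W2 μ μ' := by
  obtain ⟨M, hM, rfl⟩ := exists_mem_monoCone hμ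
  obtain ⟨M', hM', rfl⟩ := exists_mem_monoCone hμ'
  obtain ⟨N, hN, rfl⟩ := exists_mem_monoCone hν
  obtain ⟨N', hN', rfl⟩ := exists_mem_monoCone hν'
  obtain ⟨R, hR, rfl⟩ := exists_mem_monoCone hρs.1
  obtain ⟨R', hR', rfl⟩ := exists_mem_monoCone hρs'.1
  obtain ⟨p, hp, h0, h⟩ := exists_isotonic (M - N)
  obtain ⟨p', hp', h0', h'⟩ := exists_isotonic (M' - N')
  have e := forwardProj_eq hM hN hR hp h0 h hρs
  have e' := forwardProj_eq hM' hN' hR' hp' h0' h' hρs'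
  have hpp := isotonic_nonexpansive hp hp' h0 h h0' h'
  have hNN := norm_sub_le_W2 hN hN'
  have hMM := norm_sub_le_W2 hM hM'
  calc W2 (unitLaw.map R) (unitLaw.map R') ≤ ‖R - R'‖ := W2_map_le _ _
    _ = ‖(N - N') + (p - p')‖ := by rw [e, e']; congr 1; abel
    _ ≤ ‖N - N'‖ + ‖p - p'‖ := norm_add_le _ _
    _ ≤ ‖N - N'‖ + ‖(M - M') - (N - N')‖ := by
        gcongr; refine hpp.trans_eq ?_; congr 1; abel
    _ ≤ ‖N - N'‖ + (‖M - M'‖ + ‖N - N'‖) := by gcongr; exact norm_sub_le _ _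
    _ ≤ _ := by linarith

end
end

section
/- Let d ≥ 1 and let μ, μ̃, ν, ν̃ ∈ P₂(ℝ^d). If μ* is a backward projection of μ onto the convex order cone below ν, and μ̃* is a backward projection of μ̃ onto the convex order cone below ν̃, then W₂(μ*, μ̃*) ≤ W₂(μ, μ̃) + sqrt((W₂(μ,ν) + W₂(μ,ν̃))·W₂(ν, ν̃)). -/
/-!
All measures are lifted to random vectors in the Hilbert space `Lp E 2 P` over one probability space
`(Ω, P)`. There the set `below P ν` of random vectors with law below `ν` is convex, since the convex
order is tested by maxima of affine functions (`convexOrder_of_maxAff`, `convex_below`). A backward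
projection, nearly optimally coupled with `μ`, is a near-projection in `L²` onto this convex set and
satisfies the Hilbert space variational inequality up to a small error (`near_of_coupling`,
`inner_le_of_near`).

Let `X`, `X'`, `Y`, `Y'` realize `μ`, `μ'`, `μs`, `μs'`, and let `T` be a near-projection of `X` onto
`below P ν'`.

* `Y'` and `T` are near-projections of `X'` and `X` onto the same convex set, so
  `‖T - Y'‖ ≤ ‖X - X'‖` up to a small error (`norm_sub_le_of_near`).
* `Y` and `T` are near-projections of the same `X` onto two different sets. The identity
  `‖Y - T‖² = ⟪X - T, Y - T⟫ + ⟪X - Y, T - Y⟫` and the fact that the support functions of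
  `below P ν` and `below P ν'` at `U` differ by at most `‖U‖ * W2 ν ν'`
  (`inner_le_of_forall_inner_le`) bound `‖Y - T‖²` by `(‖X - Y‖ + ‖X - T‖) * W2 ν ν'`, up to a small
  error (`norm_sub_sq_le_of_near`).

The triangle inequality and the limit of vanishing errors give the theorem.

The support function estimate is where martingale couplings would usually enter. It is enough to treat
`U = u (I ω)` with a finite index `I`. In place of Strassen's theorem, a Hahn–Banach separation in
finite dimension (`mem_closure_reachable`) approximates the masses of `I` and the value of `⟪U, f⟫` by
those of a measurable partition of unity integrated against `ν`, and `inner_le_of_partition` corrects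
the masses. A partition of unity over `ν` is moved along a coupling of `ν` and `ν'` by taking
conditional means, which stay below `ν'` (`exists_barycenter_mem_below`).
-/


open MeasureTheory

noncomputable section

variable {V : Type*} [NormedAddCommGroup V] [NormedSpace ℝ V]
  [MeasurableSpace V] [BorelSpace V]

open Filter Topology ProbabilityTheory
open scoped ENNReal RealInnerProductSpace

set_option linter.unusedSectionVars false

/-! ### The convex order tested by maxima of affine functions -/

section ConvexOrder

variable {E : Type} [NormedAddCommGroup E] [InnerProductSpace ℝ E] [FiniteDimensional ℝ E]
  [MeasurableSpace E] [BorelSpace E]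

/-- The maximum of finitely many affine functions `x ↦ ℓ i x + b i`. -/
def maxAff {ι : Type} [Fintype ι] [Nonempty ι] (ℓ : ι → E →L[ℝ] ℝ) (b : ι → ℝ) (x : E) : ℝ :=
  Finset.univ.sup' Finset.univ_nonempty fun i => ℓ i x + b i

section maxAff

variable {ι : Type} [Fintype ι] [Nonempty ι] (ℓ : ι → E →L[ℝ] ℝ) (b : ι → ℝ)

lemma le_maxAff (x : E) (i : ι) : ℓ i x + b i ≤ maxAff ℓ b x :=
  Finset.le_sup' (fun i => ℓ i x + b i) (Finset.mem_univ i)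

lemma exists_maxAff_eq (x : E) : ∃ i, maxAff ℓ b x = ℓ i x + b i := by
  obtain ⟨i, -, hi⟩ := Finset.exists_mem_eq_sup' (Finset.univ_nonempty (α := ι))
    (fun i => ℓ i x + b i)
  exact ⟨i, hi⟩

lemma maxAff_le {x : E} {c : ℝ} (h : ∀ i, ℓ i x + b i ≤ c) : maxAff ℓ b x ≤ c :=
  Finset.sup'_le _ _ fun i _ => h i

lemma continuous_maxAff : Continuous (maxAff ℓ b) := by
  unfold maxAff
  exact Continuous.finset_sup'_apply _ fun i _ => by fun_prop

lemma convexOn_maxAff : ConvexOn ℝ Set.univ (maxAff ℓ b) := by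
  refine ⟨convex_univ, fun x _ y _ s t hs ht hst => maxAff_le _ _ fun i => ?_⟩
  have h1 := mul_le_mul_of_nonneg_left (le_maxAff ℓ b x i) hs
  have h2 := mul_le_mul_of_nonneg_left (le_maxAff ℓ b y i) ht
  have h3 : b i = s * b i + t * b i := by rw [← add_mul, hst, one_mul]
  simp only [map_add, map_smul, smul_eq_mul]
  linarith

lemma integrable_maxAff {Ω : Type*} [MeasurableSpace Ω] {P : Measure Ω} [IsFiniteMeasure P]
    {f : Ω → E} (hf : Integrable f P) : Integrable (fun ω => maxAff ℓ b (f ω)) P := by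
  have hi : ∀ i, Integrable (fun ω => ℓ i (f ω) + b i) P := fun i =>
    ((ℓ i).integrable_comp hf).add (integrable_const _)
  refine Integrable.mono' (g := fun ω => ∑ i, ‖ℓ i (f ω) + b i‖)
    (integrable_finsetSum _ fun i _ => (hi i).norm)
    ((continuous_maxAff ℓ b).comp_aestronglyMeasurable hf.1) (ae_of_all _ fun ω => ?_)
  obtain ⟨i, hi⟩ := exists_maxAff_eq ℓ b (f ω)
  rw [hi]
  exact Finset.single_le_sum (f := fun i => ‖ℓ i (f ω) + b i‖)
    (fun j _ => norm_nonneg _) (Finset.mem_univ i)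

end maxAff

lemma IsP2.memLp {μ : Measure E} (h : IsP2 μ) : MemLp (fun x => x) 2 μ :=
  (memLp_two_iff_integrable_sq_norm aestronglyMeasurable_id).2 h.2

lemma IsP2.integrable {μ : Measure E} (h : IsP2 μ) : Integrable (fun x => x) μ :=
  have := h.1
  h.memLp.integrable one_le_two

/-- In the convex order it suffices to test maxima of finitely many affine functions: any convex
function is the increasing limit of a sequence of those. -/
lemma convexOrder_of_maxAff {μ ν : Measure E} (hμ : IsP2 μ) (hν : IsP2 ν)
    (h : ∀ (n : ℕ) (ℓ : Fin (n + 1) → E →L[ℝ] ℝ) (b : Fin (n + 1) → ℝ),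
      ∫ x, maxAff ℓ b x ∂μ ≤ ∫ x, maxAff ℓ b x ∂ν) : ConvexOrder μ ν := by
  have := hμ.1
  have := hν.1
  intro φ hφ hφμ hφν
  have hcont : Continuous φ := continuousOn_univ.1 (hφ.continuousOn isOpen_univ)
  obtain ⟨l, c, hle, hsup⟩ := hφ.real_univ_sSup_of_nat_affine_eq hcont.lowerSemicontinuous
  have hle' : ∀ i x, l i x + c i ≤ φ x := fun i x => by simpa using hle i x
  have hsup' : ∀ x, ⨆ i, (l i x + c i) = φ x := fun x => by
    have := congrFun hsup x
    simpa [iSup_apply] using this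
  let ψ : ℕ → E → ℝ := fun n => maxAff (fun i : Fin (n + 1) => l i) (fun i => c i)
  have hmono : ∀ x, Monotone fun n => ψ n x := by
    intro x m n hmn
    refine maxAff_le _ _ fun i => ?_
    exact le_maxAff (fun i : Fin (n + 1) => l i) (fun i => c i) x ⟨i, by omega⟩
  have hψφ : ∀ n x, ψ n x ≤ φ x := fun n x => maxAff_le _ _ fun i => hle' i x
  have hlim : ∀ x, Tendsto (fun n => ψ n x) atTop (𝓝 (φ x)) := by
    intro x
    refine tendsto_atTop_isLUB (hmono x) ⟨?_, ?_⟩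
    · rintro _ ⟨n, rfl⟩
      exact hψφ n x
    · intro B hB
      rw [← hsup' x]
      refine ciSup_le fun i => le_trans ?_ (hB ⟨i, rfl⟩)
      exact le_maxAff (fun i : Fin (i + 1) => l i) (fun i => c i) x ⟨i, by omega⟩
  have hT := integral_tendsto_of_tendsto_of_monotone
    (fun n => integrable_maxAff (fun i : Fin (n + 1) => l i) (fun i => c i) hμ.integrable)
    hφμ (ae_of_all _ hmono) (ae_of_all _ hlim)
  refine le_of_tendsto' hT fun n => (h n _ _).trans ?_
  exact integral_mono (integrable_maxAff _ _ hν.integrable) hφν (hψφ n)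

lemma ConvexOrder.maxAff_le {μ ν : Measure E} (hμ : IsP2 μ) (hν : IsP2 ν) (h : ConvexOrder μ ν)
    {ι : Type} [Fintype ι] [Nonempty ι] (ℓ : ι → E →L[ℝ] ℝ) (b : ι → ℝ) :
    ∫ x, maxAff ℓ b x ∂μ ≤ ∫ x, maxAff ℓ b x ∂ν :=
  have := hμ.1
  have := hν.1
  h _ (convexOn_maxAff ℓ b) (integrable_maxAff ℓ b hμ.integrable)
    (integrable_maxAff ℓ b hν.integrable)

end ConvexOrder

/-! ### Square-integrable random vectors below a given law -/

section SquareIntegrable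

variable {E : Type} [NormedAddCommGroup E] [InnerProductSpace ℝ E] [FiniteDimensional ℝ E]
  [MeasurableSpace E] [BorelSpace E]
  {Ω : Type} [MeasurableSpace Ω] {P : Measure Ω} [IsProbabilityMeasure P]

lemma integrable_coe (f : Lp E 2 P) : Integrable f P :=
  (Lp.memLp f).integrable one_le_two

lemma aemeasurable_coe (f : Lp E 2 P) : AEMeasurable f P :=
  (Lp.aestronglyMeasurable f).aemeasurable

lemma norm_sq_eq_integral (f : Lp E 2 P) : ‖f‖ ^ 2 = ∫ ω, ‖f ω‖ ^ 2 ∂P := by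
  rw [← real_inner_self_eq_norm_sq, L2.inner_def]
  simp

lemma isP2_law (f : Lp E 2 P) : IsP2 (P.map f) := by
  refine ⟨Measure.isProbabilityMeasure_map (aemeasurable_coe f), ?_⟩
  rw [integrable_map_measure (by fun_prop) (aemeasurable_coe f)]
  exact (memLp_two_iff_integrable_sq_norm (Lp.aestronglyMeasurable f)).1 (Lp.memLp f)

lemma integral_law {φ : E → ℝ} (hφ : Continuous φ) (f : Lp E 2 P) :
    ∫ x, φ x ∂(P.map f) = ∫ ω, φ (f ω) ∂P :=
  integral_map (aemeasurable_coe f) hφ.aestronglyMeasurable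

variable (P) in
/-- The square-integrable random vectors on `(Ω, P)` whose law is below `ν` in the convex order. -/
def below (ν : Measure E) : Set (Lp E 2 P) := {f | ConvexOrder (P.map f) ν}

lemma mem_below_iff {ν : Measure E} (hν : IsP2 ν) (f : Lp E 2 P) :
    f ∈ below P ν ↔ ∀ (n : ℕ) (ℓ : Fin (n + 1) → E →L[ℝ] ℝ) (b : Fin (n + 1) → ℝ),
      ∫ ω, maxAff ℓ b (f ω) ∂P ≤ ∫ x, maxAff ℓ b x ∂ν := by
  simp_rw [← integral_law (continuous_maxAff _ _)]
  exact ⟨fun h n ℓ b => h.maxAff_le (isP2_law f) hν ℓ b, convexOrder_of_maxAff (isP2_law f) hν⟩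

/-- Averaging two random vectors pointwise averages convex test functions, whatever the coupling. -/
lemma convex_below {ν : Measure E} (hν : IsP2 ν) : Convex ℝ (below P ν) := by
  intro f hf g hg s t hs ht hst
  rw [mem_below_iff hν] at hf hg ⊢
  intro n ℓ b
  have h1 : ∀ᵐ ω ∂P, (s • f + t • g : Lp E 2 P) ω = s • f ω + t • g ω := by
    filter_upwards [Lp.coeFn_add (s • f) (t • g), Lp.coeFn_smul s f, Lp.coeFn_smul t g]
      with ω h1 h2 h3
    rw [h1, Pi.add_apply, h2, h3]
    rfl
  have hfi := integrable_maxAff ℓ b (integrable_coe f)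
  have hgi := integrable_maxAff ℓ b (integrable_coe g)
  calc ∫ ω, maxAff ℓ b ((s • f + t • g : Lp E 2 P) ω) ∂P
      ≤ ∫ ω, (s * maxAff ℓ b (f ω) + t * maxAff ℓ b (g ω)) ∂P := by
        refine integral_mono_ae (integrable_maxAff ℓ b (integrable_coe _))
          ((hfi.const_mul s).add (hgi.const_mul t)) ?_
        filter_upwards [h1] with ω hω
        rw [hω]
        exact (convexOn_maxAff ℓ b).2 trivial trivial hs ht hst
    _ = s * ∫ ω, maxAff ℓ b (f ω) ∂P + t * ∫ ω, maxAff ℓ b (g ω) ∂P := by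
        rw [integral_add (hfi.const_mul s) (hgi.const_mul t), integral_const_mul,
          integral_const_mul]
    _ ≤ s * ∫ x, maxAff ℓ b x ∂ν + t * ∫ x, maxAff ℓ b x ∂ν :=
        add_le_add (mul_le_mul_of_nonneg_left (hf n ℓ b) hs)
          (mul_le_mul_of_nonneg_left (hg n ℓ b) ht)
    _ = ∫ x, maxAff ℓ b x ∂ν := by rw [← add_mul, hst, one_mul]

lemma norm_sq_le_of_mem_below {ν : Measure E} (hν : IsP2 ν) {f : Lp E 2 P} (hf : f ∈ below P ν) :
    ‖f‖ ^ 2 ≤ ∫ x, ‖x‖ ^ 2 ∂ν := by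
  rw [norm_sq_eq_integral, ← integral_law (φ := fun x => ‖x‖ ^ 2) (by fun_prop)]
  exact hf _ (convexOn_univ_norm.pow (fun _ _ => norm_nonneg _) 2) (isP2_law f).2 hν.2

end SquareIntegrable

/-! ### A weak Strassen theorem for finite partitions -/

section SupportFunction

variable {E : Type} [NormedAddCommGroup E] [InnerProductSpace ℝ E] [FiniteDimensional ℝ E]
  [MeasurableSpace E] [BorelSpace E]
  {Ω : Type} [MeasurableSpace Ω] {P : Measure Ω} [IsProbabilityMeasure P]
  {ι : Type} [Fintype ι]

/-- A measurable partition of unity on `E`; equivalently, a Markov kernel from `E` to the finite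
set `ι`. -/
structure IsPartition (w : ι → E → ℝ) : Prop where
  measurable : ∀ i, Measurable (w i)
  nonneg : ∀ i x, 0 ≤ w i x
  sum_eq : ∀ x, ∑ i, w i x = 1

lemma IsPartition.le_one {w : ι → E → ℝ} (hw : IsPartition w) (i : ι) (x : E) : w i x ≤ 1 := by
  rw [← hw.sum_eq x]
  exact Finset.single_le_sum (f := fun i => w i x) (fun j _ => hw.nonneg j x) (Finset.mem_univ i)

lemma IsPartition.integrable_mul {w : ι → E → ℝ} (hw : IsPartition w) (i : ι) {X : Type*}
    [MeasurableSpace X] {m : Measure X} {g : X → ℝ} (hg : Integrable g m) {h : X → E}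
    (hh : Measurable h) : Integrable (fun x => w i (h x) * g x) m := by
  refine hg.mono (((hw.measurable i).comp hh).aestronglyMeasurable.mul hg.1)
    (ae_of_all _ fun x => ?_)
  rw [norm_mul, Real.norm_of_nonneg (hw.nonneg i _)]
  exact mul_le_of_le_one_left (norm_nonneg _) (hw.le_one i _)

lemma IsPartition.integrable {w : ι → E → ℝ} (hw : IsPartition w) (i : ι) (m : Measure E)
    [IsFiniteMeasure m] : Integrable (w i) m := by
  simpa using hw.integrable_mul i (integrable_const (1 : ℝ)) measurable_id (m := m)

/-- The pairs `((∫ w i dν)_i, ∑ i, ∫ w i ⟪u i, ·⟫ dν)` reached by partitions of unity `w`. -/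
def reachable (ν : Measure E) (u : ι → E) : Set ((ι → ℝ) × ℝ) :=
  {z | ∃ w : ι → E → ℝ, IsPartition w ∧ (∀ i, z.1 i = ∫ x, w i x ∂ν) ∧
    z.2 = ∑ i, ∫ x, w i x * ⟪u i, x⟫ ∂ν}

lemma IsP2.integrable_inner {ν : Measure E} (hν : IsP2 ν) (u : E) :
    Integrable (fun x => ⟪u, x⟫) ν :=
  hν.integrable.const_inner u

lemma convex_reachable {ν : Measure E} (hν : IsP2 ν) (u : ι → E) : Convex ℝ (reachable ν u) := by
  have := hν.1
  rintro z ⟨w, hw, hz1, hz2⟩ z' ⟨w', hw', hz1', hz2'⟩ s t hs ht hst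
  refine ⟨fun i x => s * w i x + t * w' i x, ⟨fun i => ?_, fun i x => ?_, fun x => ?_⟩,
    fun i => ?_, ?_⟩
  · exact ((hw.measurable i).const_mul s).add ((hw'.measurable i).const_mul t)
  · have := hw.nonneg i x
    have := hw'.nonneg i x
    positivity
  · rw [Finset.sum_add_distrib, ← Finset.mul_sum, ← Finset.mul_sum, hw.sum_eq, hw'.sum_eq]
    linarith
  · rw [integral_add ((hw.integrable i ν).const_mul s) ((hw'.integrable i ν).const_mul t),
      integral_const_mul, integral_const_mul, ← hz1, ← hz1']
    simp
  · simp only [Prod.snd_add, Prod.smul_snd, smul_eq_mul, hz2, hz2', Finset.mul_sum]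
    rw [← Finset.sum_add_distrib]
    refine Finset.sum_congr rfl fun i _ => ?_
    rw [← integral_const_mul, ← integral_const_mul, ← integral_add]
    · refine integral_congr_ae (ae_of_all _ fun x => ?_)
      simp only
      ring
    · exact (hw.integrable_mul i (hν.integrable_inner (u i)) measurable_id).const_mul s
    · exact (hw'.integrable_mul i (hν.integrable_inner (u i)) measurable_id).const_mul t

/-- The partition of unity that distributes `x` uniformly over the indices `i` at which
`ℓ i x + b i` is maximal. -/
lemma exists_argmax_partition [Nonempty ι] (ℓ : ι → E →L[ℝ] ℝ) (b : ι → ℝ) :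
    ∃ w : ι → E → ℝ, IsPartition w ∧ ∀ x, ∑ i, w i x * (ℓ i x + b i) = maxAff ℓ b x := by
  classical
  let e : ι → E → ℝ := fun i x => if ℓ i x + b i = maxAff ℓ b x then 1 else 0
  have he0 : ∀ i x, 0 ≤ e i x := fun i x => by simp only [e]; split_ifs <;> norm_num
  have hN : ∀ x, 0 < ∑ i, e i x := fun x => by
    obtain ⟨i, hi⟩ := exists_maxAff_eq ℓ b x
    have h1 : e i x = 1 := by simp [e, hi]
    have h2 := Finset.single_le_sum (f := fun i => e i x) (fun j _ => he0 j x) (Finset.mem_univ i)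
    simp only [h1] at h2
    linarith
  have hem : ∀ i, Measurable (e i) := fun i =>
    Measurable.ite (measurableSet_eq_fun (by fun_prop) (continuous_maxAff ℓ b).measurable)
      measurable_const measurable_const
  refine ⟨fun i x => e i x / ∑ j, e j x, ⟨fun i => ?_, fun i x => ?_, fun x => ?_⟩, fun x => ?_⟩
  · exact (hem i).div (Finset.measurable_sum _ fun j _ => hem j)
  · exact div_nonneg (he0 i x) (hN x).le
  · rw [← Finset.sum_div, div_self (hN x).ne']
  · have h : ∀ i, e i x / (∑ j, e j x) * (ℓ i x + b i)
        = e i x / (∑ j, e j x) * maxAff ℓ b x := fun i => by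
      simp only [e]
      split_ifs with h
      · rw [h]
      · simp
    rw [Finset.sum_congr rfl fun i _ => h i, ← Finset.sum_mul, ← Finset.sum_div,
      div_self (hN x).ne', one_mul]

variable [MeasurableSpace ι] [MeasurableSingletonClass ι]

lemma integral_comp_fintype {I : Ω → ι} (hI : Measurable I) (a : ι → ℝ) :
    ∫ ω, a (I ω) ∂P = ∑ i, P.real (I ⁻¹' {i}) * a i := by
  have : IsProbabilityMeasure (P.map I) := Measure.isProbabilityMeasure_map hI.aemeasurable
  rw [← integral_map (f := a) hI.aemeasurable .of_discrete, integral_fintype .of_finite]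
  refine Finset.sum_congr rfl fun i _ => ?_
  rw [map_measureReal_apply hI (measurableSet_singleton i), smul_eq_mul]

lemma integrable_inner_index {I : Ω → ι} (hI : Measurable I) (f : Lp E 2 P) (u : ι → E) :
    Integrable (fun ω => ⟪u (I ω), f ω⟫) P := by
  refine Integrable.mono' (g := fun ω => (∑ i, ‖u i‖) * ‖f ω‖)
    ((integrable_coe f).norm.const_mul _) ?_ (ae_of_all _ fun ω => ?_)
  · have : Measurable fun ω => u (I ω) := (Measurable.of_discrete (f := u)).comp hI
    exact this.aestronglyMeasurable.inner (integrable_coe f).1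
  · refine (norm_inner_le_norm _ _).trans (mul_le_mul_of_nonneg_right ?_ (norm_nonneg _))
    exact Finset.single_le_sum (f := fun i => ‖u i‖) (fun j _ => norm_nonneg _)
      (Finset.mem_univ (I ω))

/-- A weak form of Strassen's theorem. A functional `(q, s) ↦ ∑ i, a i * q i + c * s` separating the
left-hand side from the closed convex set on the right would violate the convex order for the test
function `max_i (c * ⟪u i, ·⟫ + a i)`. -/
lemma mem_closure_reachable [Nonempty ι] {ν : Measure E} (hν : IsP2 ν) {I : Ω → ι}
    (hI : Measurable I) {f : Lp E 2 P} (hf : f ∈ below P ν) (u : ι → E) :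
    ((fun i => P.real (I ⁻¹' {i})), ∫ ω, ⟪u (I ω), f ω⟫ ∂P) ∈ closure (reachable ν u) := by
  classical
  have := hν.1
  by_contra hcon
  obtain ⟨F, r, hFr, hrF⟩ := geometric_hahn_banach_closed_point (convex_reachable hν u).closure
    isClosed_closure hcon
  let a : ι → ℝ := fun i => F ((fun j => if i = j then 1 else 0), 0)
  let c : ℝ := F (0, 1)
  have hF : ∀ q s, F (q, s) = ∑ i, q i * a i + c * s := by
    intro q s
    have h1 : F (q, s) = (F.comp (.inl ℝ (ι → ℝ) ℝ)) q + F (0, s) := by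
      simp [← map_add]
    have h2 : F (0, s) = c * s := by
      have : ((0, s) : (ι → ℝ) × ℝ) = s • (0, 1) := by simp
      rw [this, map_smul, smul_eq_mul, mul_comm]
    have h3 := LinearMap.pi_apply_eq_sum_univ (F.comp (.inl ℝ (ι → ℝ) ℝ)).toLinearMap q
    simp only [ContinuousLinearMap.coe_coe] at h3
    rw [h1, h2, h3]
    simp [a]
  let ℓ : ι → E →L[ℝ] ℝ := fun i => c • innerSL ℝ (u i)
  have hℓ : ∀ i x, ℓ i x = c * ⟪u i, x⟫ := fun i x => by simp [ℓ]
  obtain ⟨w, hw, hwmax⟩ := exists_argmax_partition ℓ a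
  have hi1 : ∀ i, Integrable (fun x => w i x * ⟪u i, x⟫) ν := fun i =>
    hw.integrable_mul i (hν.integrable_inner (u i)) measurable_id
  have hleft : F ((fun i => ∫ x, w i x ∂ν), ∑ i, ∫ x, w i x * ⟪u i, x⟫ ∂ν)
      = ∫ x, maxAff ℓ a x ∂ν := by
    rw [hF, Finset.mul_sum, ← Finset.sum_add_distrib]
    have : ∀ i, (∫ x, w i x ∂ν) * a i + c * ∫ x, w i x * ⟪u i, x⟫ ∂ν
        = ∫ x, w i x * (ℓ i x + a i) ∂ν := fun i => by
      rw [← integral_mul_const, ← integral_const_mul,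
        ← integral_add ((hw.integrable i ν).mul_const _) ((hi1 i).const_mul _)]
      refine integral_congr_ae (ae_of_all _ fun x => ?_)
      simp only [hℓ]
      ring
    rw [Finset.sum_congr rfl fun i _ => this i, ← integral_finsetSum]
    · simp_rw [hwmax]
    · intro i _
      exact hw.integrable_mul i (((ℓ i).integrable_comp hν.integrable).add (integrable_const _))
        measurable_id
  have hright : F ((fun i => P.real (I ⁻¹' {i})), ∫ ω, ⟪u (I ω), f ω⟫ ∂P)
      = ∫ ω, (ℓ (I ω) (f ω) + a (I ω)) ∂P := by
    rw [hF, ← integral_comp_fintype hI a, ← integral_const_mul, ← integral_add]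
    · simp_rw [hℓ, add_comm]
    · exact (Integrable.of_finite (f := a) (μ := P.map I)).comp_measurable hI
    · exact (integrable_inner_index hI f u).const_mul c
  have h1 := hFr (fun i => ∫ x, w i x ∂ν, ∑ i, ∫ x, w i x * ⟪u i, x⟫ ∂ν)
    (subset_closure ⟨w, hw, fun i => rfl, rfl⟩)
  have h2 : ∫ ω, (ℓ (I ω) (f ω) + a (I ω)) ∂P ≤ ∫ ω, maxAff ℓ a (f ω) ∂P := by
    refine integral_mono ?_ (integrable_maxAff ℓ a (integrable_coe f))
      fun ω => le_maxAff ℓ a (f ω) (I ω)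
    simp only [hℓ]
    exact ((integrable_inner_index hI f u).const_mul c).add
      ((Integrable.of_finite (f := a) (μ := P.map I)).comp_measurable hI)
  have h3 : ∫ ω, maxAff ℓ a (f ω) ∂P ≤ ∫ x, maxAff ℓ a x ∂ν := by
    rw [← integral_law (continuous_maxAff ℓ a)]
    exact ConvexOrder.maxAff_le (isP2_law f) hν hf ℓ a
  rw [hleft] at h1
  rw [hright] at hrF
  linarith

/-- Masses that are only approximately those of `I` are corrected by mixing the partition of unity
with a constant one, which becomes negligible as `η → 0`. -/
lemma inner_le_of_partition [Nonempty ι] {ν : Measure E} (hν : IsP2 ν) {I : Ω → ι}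
    (hI : Measurable I) (hpos : ∀ i, 0 < P.real (I ⁻¹' {i})) {f : Lp E 2 P} (hf : f ∈ below P ν)
    (u : ι → E) {C : ℝ}
    (hC : ∀ w : ι → E → ℝ, IsPartition w → (∀ i, ∫ x, w i x ∂ν = P.real (I ⁻¹' {i})) →
      ∑ i, ∫ x, w i x * ⟪u i, x⟫ ∂ν ≤ C) :
    ∫ ω, ⟪u (I ω), f ω⟫ ∂P ≤ C := by
  have := hν.1
  set p : ι → ℝ := fun i => P.real (I ⁻¹' {i}) with hp
  have hpsum : ∑ i, p i = 1 := by
    have := integral_comp_fintype (P := P) hI (fun _ => 1)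
    simpa using this.symm
  let M : ι → ℝ := fun i => ∫ x, ⟪u i, x⟫ ∂ν
  have key : ∀ η : ℝ, 0 < η →
      ∫ ω, ⟪u (I ω), f ω⟫ ∂P + ∑ i, ((1 + η) * p i - p i) * M i ≤ (1 + η) * C := by
    intro η hη
    let O : Set ((ι → ℝ) × ℝ) := {z | ∀ i, z.1 i < (1 + η) * p i}
    let K : Set ((ι → ℝ) × ℝ) := {z | z.2 + ∑ i, ((1 + η) * p i - z.1 i) * M i ≤ (1 + η) * C}
    have hO : IsOpen O := by
      simp only [O, Set.ofPred_forall]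
      exact isOpen_iInter_of_finite fun i => isOpen_lt (by fun_prop) (by fun_prop)
    have hK : IsClosed K := isClosed_le (by fun_prop) (by fun_prop)
    have hsub : reachable ν u ∩ O ⊆ K := by
      rintro z ⟨⟨w, hw, hz1, hz2⟩, hzO⟩
      have hη' : 0 < 1 + η := by linarith
      let w' : ι → E → ℝ := fun i x => (w i x + ((1 + η) * p i - z.1 i)) / (1 + η)
      have hzsum : ∑ i, z.1 i = 1 := by
        simp_rw [hz1]
        rw [← integral_finsetSum _ fun i _ => hw.integrable i ν]
        simp [hw.sum_eq]
      have hw' : IsPartition w' := by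
        refine ⟨fun i => ((hw.measurable i).add_const _).div_const _, fun i x => ?_, fun x => ?_⟩
        · have := hw.nonneg i x
          have := hzO i
          exact div_nonneg (by linarith) hη'.le
        · simp only [w']
          rw [← Finset.sum_div, Finset.sum_add_distrib, Finset.sum_sub_distrib, ← Finset.mul_sum,
            hw.sum_eq, hpsum, hzsum]
          field_simp
          ring
      have hmass : ∀ i, ∫ x, w' i x ∂ν = p i := fun i => by
        simp only [w']
        rw [integral_div, integral_add (hw.integrable i ν) (integrable_const _), ← hz1]
        simp only [integral_const, probReal_univ, smul_eq_mul]
        field_simp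
        ring
      have h := hC w' hw' hmass
      have hval : ∀ i, ∫ x, w' i x * ⟪u i, x⟫ ∂ν
          = (∫ x, w i x * ⟪u i, x⟫ ∂ν + ((1 + η) * p i - z.1 i) * M i) / (1 + η) := fun i => by
        rw [← integral_const_mul, ← integral_add, ← integral_div]
        · refine integral_congr_ae (ae_of_all _ fun x => ?_)
          simp only [w']
          ring
        · exact hw.integrable_mul i (hν.integrable_inner (u i)) measurable_id
        · exact (hν.integrable_inner (u i)).const_mul _
      rw [Finset.sum_congr rfl fun i _ => hval i, ← Finset.sum_div, Finset.sum_add_distrib,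
        ← hz2, div_le_iff₀ hη'] at h
      simp only [K, Set.mem_ofPred_eq]
      linarith
    have hmem := closure_minimal hsub hK
      (hO.closure_inter ⟨mem_closure_reachable hν hI hf u, fun i => ?_⟩)
    · exact hmem
    · have := mul_pos hη (hpos i)
      simp only
      change p i < (1 + η) * p i
      have h2 : 0 < η * p i := this
      linarith
  have ht1 : Tendsto (fun η : ℝ => ∫ ω, ⟪u (I ω), f ω⟫ ∂P + ∑ i, ((1 + η) * p i - p i) * M i)
      (𝓝[>] 0) (𝓝 (∫ ω, ⟪u (I ω), f ω⟫ ∂P)) := by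
    refine tendsto_nhdsWithin_of_tendsto_nhds (Continuous.tendsto' (by fun_prop) _ _ ?_)
    simp
  have ht2 : Tendsto (fun η : ℝ => (1 + η) * C) (𝓝[>] 0) (𝓝 C) :=
    tendsto_nhdsWithin_of_tendsto_nhds (Continuous.tendsto' (by fun_prop) _ _ (by simp))
  exact le_of_tendsto_of_tendsto ht1 ht2 (by filter_upwards [self_mem_nhdsWithin] with η hη
                                             using key η hη)

end SupportFunction

/-! ### The Wasserstein distance and couplings -/

section Wasserstein

variable {E : Type} [NormedAddCommGroup E] [InnerProductSpace ℝ E] [FiniteDimensional ℝ E]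
  [MeasurableSpace E] [BorelSpace E] {μ ν : Measure E}

lemma W2sq_le_of_coupling {π : Measure (E × E)} (hπ : IsCoupling π μ ν) :
    W2sq μ ν ≤ ∫ q, ‖q.1 - q.2‖ ^ 2 ∂π := by
  refine csInf_le ⟨0, ?_⟩ ⟨π, hπ, rfl⟩
  rintro _ ⟨π', -, rfl⟩
  exact integral_nonneg fun q => by positivity

lemma W2sq_nonneg (μ ν : Measure E) : 0 ≤ W2sq μ ν := by
  refine Real.sInf_nonneg ?_
  rintro _ ⟨π', -, rfl⟩
  exact integral_nonneg fun q => by positivity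

lemma exists_coupling_lt (hμ : IsP2 μ) (hν : IsP2 ν) {ε : ℝ} (hε : 0 < ε) :
    ∃ π : Measure (E × E), IsCoupling π μ ν ∧ ∫ q, ‖q.1 - q.2‖ ^ 2 ∂π < W2sq μ ν + ε := by
  have := hμ.1
  have := hν.1
  obtain ⟨c, ⟨π, hπ, rfl⟩, hc⟩ := Real.lt_sInf_add_pos
    (s := {c : ℝ | ∃ π : Measure (E × E), IsCoupling π μ ν ∧ c = ∫ p, ‖p.1 - p.2‖ ^ 2 ∂π})
    ⟨_, μ.prod ν, ⟨inferInstance, by simp, by simp⟩, rfl⟩ hε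
  exact ⟨π, hπ, hc⟩

lemma IsCoupling.swap {π : Measure (E × E)} (hπ : IsCoupling π μ ν) :
    IsCoupling (π.map Prod.swap) ν μ := by
  have := hπ.1
  refine ⟨Measure.isProbabilityMeasure_map measurable_swap.aemeasurable, ?_, ?_⟩
  · rw [Measure.map_map measurable_fst measurable_swap]
    exact hπ.2.2
  · rw [Measure.map_map measurable_snd measurable_swap]
    exact hπ.2.1

lemma W2sq_comm (μ ν : Measure E) : W2sq μ ν = W2sq ν μ := by
  unfold W2sq
  congr 1
  have key : ∀ μ ν : Measure E,
      {c : ℝ | ∃ π : Measure (E × E), IsCoupling π μ ν ∧ c = ∫ p, ‖p.1 - p.2‖ ^ 2 ∂π} ⊆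
      {c : ℝ | ∃ π : Measure (E × E), IsCoupling π ν μ ∧ c = ∫ p, ‖p.1 - p.2‖ ^ 2 ∂π} := by
    rintro μ ν _ ⟨π, hπ, rfl⟩
    refine ⟨_, hπ.swap, ?_⟩
    rw [integral_map measurable_swap.aemeasurable (by fun_prop)]
    simp [norm_sub_rev]
  exact Set.Subset.antisymm (key μ ν) (key ν μ)

lemma W2_sq (μ ν : Measure E) : W2 μ ν ^ 2 = W2sq μ ν := Real.sq_sqrt (W2sq_nonneg μ ν)

lemma W2_comm (μ ν : Measure E) : W2 μ ν = W2 ν μ := by rw [W2, W2, W2sq_comm]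

lemma IsCoupling.memLp_fst {π : Measure (E × E)} (hπ : IsCoupling π μ ν) (hμ : IsP2 μ) :
    MemLp (fun q : E × E => q.1) 2 π := by
  have h : MeasurePreserving Prod.fst π μ := ⟨measurable_fst, hπ.2.1⟩
  exact hμ.memLp.comp_measurePreserving h

lemma IsCoupling.memLp_snd {π : Measure (E × E)} (hπ : IsCoupling π μ ν) (hν : IsP2 ν) :
    MemLp (fun q : E × E => q.2) 2 π := by
  have h : MeasurePreserving Prod.snd π ν := ⟨measurable_snd, hπ.2.2⟩
  exact hν.memLp.comp_measurePreserving h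

variable {Ω : Type} [MeasurableSpace Ω] {P : Measure Ω} [IsProbabilityMeasure P]

lemma W2sq_law_le (f g : Lp E 2 P) : W2sq (P.map f) (P.map g) ≤ ‖f - g‖ ^ 2 := by
  have hf := aemeasurable_coe f
  have hg := aemeasurable_coe g
  have hπ : IsCoupling (P.map fun ω => (f ω, g ω)) (P.map f) (P.map g) := by
    refine ⟨Measure.isProbabilityMeasure_map (hf.prodMk hg), ?_, ?_⟩
    · rw [AEMeasurable.map_map_of_aemeasurable measurable_fst.aemeasurable (hf.prodMk hg)]
      rfl
    · rw [AEMeasurable.map_map_of_aemeasurable measurable_snd.aemeasurable (hf.prodMk hg)]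
      rfl
  refine (W2sq_le_of_coupling hπ).trans_eq ?_
  rw [integral_map (hf.prodMk hg) (by fun_prop), norm_sq_eq_integral]
  refine integral_congr_ae ?_
  filter_upwards [Lp.coeFn_sub f g] with ω hω
  rw [hω, Pi.sub_apply]

end Wasserstein

/-! ### Support functions of the sets below two laws -/

section SupportComparison

variable {E : Type} [NormedAddCommGroup E] [InnerProductSpace ℝ E] [FiniteDimensional ℝ E]
  [MeasurableSpace E] [BorelSpace E] {ν ν' : Measure E}
  {Ω : Type} [MeasurableSpace Ω] {P : Measure Ω} [IsProbabilityMeasure P]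

section Finite

variable {ι : Type} [Fintype ι] [MeasurableSpace ι] [MeasurableSingletonClass ι]

/-- The Cauchy–Schwarz inequality for `u i` and `q.1 - q.2` under the probability
`w i (q.1) π(dq)` on the pairs `(q, i)`. -/
lemma partition_cauchy_schwarz (hν : IsP2 ν) (hν' : IsP2 ν') {π : Measure (E × E)}
    (hπ : IsCoupling π ν ν') {w : ι → E → ℝ} (hw : IsPartition w) (u : ι → E) :
    ∑ i, ∫ q, w i q.1 * ⟪u i, q.1 - q.2⟫ ∂π ≤
      Real.sqrt (∑ i, (∫ x, w i x ∂ν) * ‖u i‖ ^ 2) * Real.sqrt (∫ q, ‖q.1 - q.2‖ ^ 2 ∂π) := by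
  have := hπ.1
  have hv : MemLp (fun q : E × E => q.1 - q.2) 2 π := (hπ.memLp_fst hν).sub (hπ.memLp_snd hν')
  have hv2 : Integrable (fun q : E × E => ‖q.1 - q.2‖ ^ 2) π :=
    (memLp_two_iff_integrable_sq_norm hv.1).1 hv
  have hvi : ∀ i, Integrable (fun q : E × E => ⟪u i, q.1 - q.2⟫) π := fun i =>
    (hv.integrable one_le_two).const_inner _
  have hwi : ∀ i, Integrable (fun q : E × E => w i q.1) π := fun i => by
    simpa using hw.integrable_mul i (integrable_const (1 : ℝ)) measurable_fst (m := π)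
  set A := ∑ i, (∫ x, w i x ∂ν) * ‖u i‖ ^ 2 with hA
  set B := ∑ i, ∫ q, w i q.1 * ⟪u i, q.1 - q.2⟫ ∂π with hB
  set D := ∫ q, ‖q.1 - q.2‖ ^ 2 ∂π with hD
  have hDsum : D = ∑ i, ∫ q, w i q.1 * ‖q.1 - q.2‖ ^ 2 ∂π := by
    rw [← integral_finsetSum _ fun i _ => hw.integrable_mul i hv2 measurable_fst]
    simp_rw [← Finset.sum_mul, hw.sum_eq, one_mul]
    rfl
  have hmass : ∀ i, ∫ x, w i x ∂ν = ∫ q, w i q.1 ∂π := fun i => by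
    rw [← hπ.2.1, integral_map measurable_fst.aemeasurable
      (hw.measurable i).aestronglyMeasurable]
  have hquad : ∀ t : ℝ, 0 ≤ A * (t * t) + (-2 * B) * t + D := by
    intro t
    have h : ∀ i, ∫ q, w i q.1 * ‖t • u i - (q.1 - q.2)‖ ^ 2 ∂π
        = (∫ x, w i x ∂ν) * ‖u i‖ ^ 2 * (t * t)
          + (-2 * t) * ∫ q, w i q.1 * ⟪u i, q.1 - q.2⟫ ∂π
          + ∫ q, w i q.1 * ‖q.1 - q.2‖ ^ 2 ∂π := fun i => by
      rw [hmass, mul_assoc, ← integral_mul_const, ← integral_const_mul, ← integral_add,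
        ← integral_add]
      · refine integral_congr_ae (ae_of_all _ fun q => ?_)
        simp only
        rw [norm_sub_sq_real, norm_smul, real_inner_smul_left, mul_pow, Real.norm_eq_abs, sq_abs]
        ring
      · exact ((hwi i).mul_const _).add
          ((hw.integrable_mul i (hvi i) measurable_fst).const_mul _)
      · exact hw.integrable_mul i hv2 measurable_fst
      · exact (hwi i).mul_const _
      · exact (hw.integrable_mul i (hvi i) measurable_fst).const_mul _
    have h0 : 0 ≤ ∑ i, ∫ q, w i q.1 * ‖t • u i - (q.1 - q.2)‖ ^ 2 ∂π :=
      Finset.sum_nonneg fun i _ => integral_nonneg fun q =>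
        mul_nonneg (hw.nonneg i _) (by positivity)
    rw [Finset.sum_congr rfl fun i _ => h i, Finset.sum_add_distrib, Finset.sum_add_distrib,
      ← Finset.sum_mul, ← Finset.mul_sum, ← hDsum] at h0
    linarith
  have hdisc := discrim_le_zero hquad
  rw [discrim] at hdisc
  have hA0 : 0 ≤ A := Finset.sum_nonneg fun i _ =>
    mul_nonneg (integral_nonneg (hw.nonneg i)) (by positivity)
  rw [← Real.sqrt_mul hA0]
  exact Real.le_sqrt_of_sq_le (by nlinarith)

/-- Let `(x, y)` have law `π`, and let the index `i` be drawn with probabilities `w · x`. The random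
vector `Z` sends `I = i` to the conditional mean of `y` given `i`; by Jensen its law is below `ν'`. -/
lemma exists_barycenter_mem_below (hν' : IsP2 ν') {π : Measure (E × E)}
    (hπ : IsCoupling π ν ν') {I : Ω → ι} (hI : Measurable I)
    (hpos : ∀ i, 0 < P.real (I ⁻¹' {i})) {w : ι → E → ℝ} (hw : IsPartition w)
    (hmass : ∀ i, ∫ x, w i x ∂ν = P.real (I ⁻¹' {i})) (u : ι → E) :
    ∃ Z ∈ below P ν', ∫ ω, ⟪u (I ω), Z ω⟫ ∂P = ∑ i, ∫ q, w i q.1 * ⟪u i, q.2⟫ ∂π := by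
  have := hπ.1
  have hν'1 := hν'.1
  have hy : Integrable (fun q : E × E => q.2) π := (hπ.memLp_snd hν').integrable one_le_two
  have hwy : ∀ i, Integrable (fun q : E × E => w i q.1 • q.2) π := fun i => by
    refine hy.mono (((hw.measurable i).comp measurable_fst).aestronglyMeasurable.smul hy.1)
      (ae_of_all _ fun q => ?_)
    rw [norm_smul, Real.norm_of_nonneg (hw.nonneg i _)]
    exact mul_le_of_le_one_left (norm_nonneg _) (hw.le_one i _)
  have hwi : ∀ i, Integrable (fun q : E × E => w i q.1) π := fun i => by
    simpa using hw.integrable_mul i (integrable_const (1 : ℝ)) measurable_fst (m := π)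
  have hmass' : ∀ i, ∫ q, w i q.1 ∂π = P.real (I ⁻¹' {i}) := fun i => by
    rw [← hmass, ← hπ.2.1, integral_map measurable_fst.aemeasurable
      (hw.measurable i).aestronglyMeasurable]
  let z : ι → E := fun i => (P.real (I ⁻¹' {i}))⁻¹ • ∫ q, w i q.1 • q.2 ∂π
  have hz : ∀ i (ℓ : E →L[ℝ] ℝ), P.real (I ⁻¹' {i}) * ℓ (z i) = ∫ q, w i q.1 * ℓ q.2 ∂π := by
    intro i ℓ
    simp only [z, map_smul, smul_eq_mul]
    rw [mul_inv_cancel_left₀ (hpos i).ne', ← ℓ.integral_comp_comm (hwy i)]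
    simp
  have hzI : Measurable fun ω => z (I ω) := (Measurable.of_discrete (f := z)).comp hI
  have hZ : MemLp (fun ω => z (I ω)) 2 P :=
    MemLp.of_bound hzI.aestronglyMeasurable (∑ i, ‖z i‖) (ae_of_all _ fun ω =>
      Finset.single_le_sum (f := fun i => ‖z i‖) (fun j _ => norm_nonneg _)
        (Finset.mem_univ (I ω)))
  refine ⟨hZ.toLp _, ?_, ?_⟩
  · rw [mem_below_iff hν']
    intro n ℓ b
    have hφ : Integrable (fun q : E × E => maxAff ℓ b q.2) π := integrable_maxAff ℓ b hy
    calc ∫ ω, maxAff ℓ b (hZ.toLp _ ω) ∂P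
        = ∫ ω, maxAff ℓ b (z (I ω)) ∂P := by
          refine integral_congr_ae ?_
          filter_upwards [hZ.coeFn_toLp] with ω hω
          rw [hω]
      _ = ∑ i, P.real (I ⁻¹' {i}) * maxAff ℓ b (z i) :=
          integral_comp_fintype hI fun i => maxAff ℓ b (z i)
      _ ≤ ∑ i, ∫ q, w i q.1 * maxAff ℓ b q.2 ∂π := by
          refine Finset.sum_le_sum fun i _ => ?_
          obtain ⟨k, hk⟩ := exists_maxAff_eq ℓ b (z i)
          have hℓ : Integrable (fun q : E × E => ℓ k q.2) π := (ℓ k).integrable_comp hy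
          rw [hk, mul_add, hz, ← hmass', ← integral_mul_const, ← integral_add
            (hw.integrable_mul i hℓ measurable_fst) ((hwi i).mul_const _)]
          refine integral_mono ((hw.integrable_mul i hℓ measurable_fst).add
            ((hwi i).mul_const _)) (hw.integrable_mul i hφ measurable_fst) fun q => ?_
          simp only
          rw [← mul_add]
          exact mul_le_mul_of_nonneg_left (le_maxAff ℓ b q.2 k) (hw.nonneg i _)
      _ = ∫ q, maxAff ℓ b q.2 ∂π := by
          rw [← integral_finsetSum _ fun i _ => hw.integrable_mul i hφ measurable_fst]
          simp_rw [← Finset.sum_mul, hw.sum_eq, one_mul]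
      _ = ∫ x, maxAff ℓ b x ∂ν' := by
          rw [← hπ.2.2, integral_map measurable_snd.aemeasurable
            (continuous_maxAff ℓ b).aestronglyMeasurable]
  · calc ∫ ω, ⟪u (I ω), hZ.toLp _ ω⟫ ∂P
        = ∫ ω, ⟪u (I ω), z (I ω)⟫ ∂P := by
          refine integral_congr_ae ?_
          filter_upwards [hZ.coeFn_toLp] with ω hω
          rw [hω]
      _ = ∑ i, P.real (I ⁻¹' {i}) * ⟪u i, z i⟫ :=
          integral_comp_fintype hI fun i => ⟪u i, z i⟫
      _ = _ := Finset.sum_congr rfl fun i _ => by simpa using hz i (innerSL ℝ (u i))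

/-- The comparison of support functions for a functional `U` with finitely many values. A partition
of unity turns `f` into a random index over `ν`, a nearly optimal coupling of `ν` and `ν'` moves it
to a competitor below `ν'`, and the Cauchy–Schwarz inequality bounds the loss. -/
lemma inner_le_of_index (hν : IsP2 ν) (hν' : IsP2 ν') [Nonempty ι] {I : Ω → ι}
    (hI : Measurable I) (hpos : ∀ i, 0 < P.real (I ⁻¹' {i})) (u : ι → E) {U f : Lp E 2 P}
    (hU : U =ᵐ[P] fun ω => u (I ω)) (hf : f ∈ below P ν) {C : ℝ}
    (hC : ∀ Z ∈ below P ν', ⟪U, Z⟫ ≤ C) : ⟪U, f⟫ ≤ C + ‖U‖ * W2 ν ν' := by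
  have := hν.1
  have hinner : ∀ g : Lp E 2 P, ⟪U, g⟫ = ∫ ω, ⟪u (I ω), g ω⟫ ∂P := fun g => by
    rw [L2.inner_def]
    refine integral_congr_ae ?_
    filter_upwards [hU] with ω hω
    rw [hω]
  have hnorm : ‖U‖ = Real.sqrt (∑ i, P.real (I ⁻¹' {i}) * ‖u i‖ ^ 2) := by
    rw [← integral_comp_fintype hI (fun i => ‖u i‖ ^ 2), eq_comm,
      Real.sqrt_eq_iff_eq_sq (integral_nonneg fun ω => by positivity) (norm_nonneg _),
      norm_sq_eq_integral]
    refine integral_congr_ae ?_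
    filter_upwards [hU] with ω hω
    rw [hω]
  have key : ∀ ε : ℝ, 0 < ε → ⟪U, f⟫ ≤ C + ‖U‖ * Real.sqrt (W2sq ν ν' + ε) := by
    intro ε hε
    obtain ⟨π, hπ, hcost⟩ := exists_coupling_lt hν hν' hε
    have := hπ.1
    rw [hinner]
    refine inner_le_of_partition hν hI hpos hf u fun w hw hmass => ?_
    obtain ⟨Z, hZ, hZu⟩ := exists_barycenter_mem_below hν' hπ hI hpos hw hmass u
    have hx : ∀ i, Integrable (fun q : E × E => w i q.1 * ⟪u i, q.1⟫) π := fun i =>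
      hw.integrable_mul i (((hπ.memLp_fst hν).integrable one_le_two).const_inner _) measurable_fst
    have hy : ∀ i, Integrable (fun q : E × E => w i q.1 * ⟪u i, q.2⟫) π := fun i =>
      hw.integrable_mul i (((hπ.memLp_snd hν').integrable one_le_two).const_inner _)
        measurable_fst
    have h1 : ∑ i, ∫ x, w i x * ⟪u i, x⟫ ∂ν - ∑ i, ∫ q, w i q.1 * ⟪u i, q.2⟫ ∂π
        = ∑ i, ∫ q, w i q.1 * ⟪u i, q.1 - q.2⟫ ∂π := by
      rw [← Finset.sum_sub_distrib]
      refine Finset.sum_congr rfl fun i _ => ?_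
      have h2 : ∫ x, w i x * ⟪u i, x⟫ ∂ν = ∫ q, w i q.1 * ⟪u i, q.1⟫ ∂π := by
        rw [← hπ.2.1, integral_map measurable_fst.aemeasurable]
        have := hw.measurable i
        exact (this.mul (by fun_prop)).aestronglyMeasurable
      rw [h2, ← integral_sub (hx i) (hy i)]
      simp_rw [inner_sub_right, mul_sub]
    have h3 := partition_cauchy_schwarz hν hν' hπ hw u
    simp_rw [hmass] at h3
    rw [← hnorm] at h3
    have h4 : ‖U‖ * Real.sqrt (∫ q, ‖q.1 - q.2‖ ^ 2 ∂π) ≤ ‖U‖ * Real.sqrt (W2sq ν ν' + ε) :=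
      mul_le_mul_of_nonneg_left (Real.sqrt_le_sqrt hcost.le) (norm_nonneg _)
    have h5 := hC Z hZ
    rw [hinner, hZu] at h5
    linarith
  have ht : Tendsto (fun ε : ℝ => C + ‖U‖ * Real.sqrt (W2sq ν ν' + ε)) (𝓝[>] 0)
      (𝓝 (C + ‖U‖ * W2 ν ν')) :=
    tendsto_nhdsWithin_of_tendsto_nhds (Continuous.tendsto' (by fun_prop) _ _ (by simp [W2]))
  exact ge_of_tendsto ht (by filter_upwards [self_mem_nhdsWithin] with ε hε using key ε hε)

end Finite

/-- Up to a null set, a simple function factors through a finite index set all of whose elements have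
positive probability: the values taken with probability zero are discarded. -/
lemma exists_index (s : SimpleFunc Ω E) :
    ∃ (S : Finset E) (I : Ω → S), Measurable I ∧ Nonempty S ∧
      (∀ i, 0 < P.real (I ⁻¹' {i})) ∧ ∀ᵐ ω ∂P, s ω = I ω := by
  classical
  let S : Finset E := s.range.filter fun v => 0 < P.real (s ⁻¹' {v})
  have hae : ∀ᵐ ω ∂P, s ω ∈ S := by
    have h : ∀ᵐ ω ∂P, ∀ v ∈ s.range, ¬ 0 < P.real (s ⁻¹' {v}) → s ω ≠ v := by
      refine (ae_ball_iff s.range.countable_toSet).2 fun v _ => ?_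
      by_cases hv : 0 < P.real (s ⁻¹' {v})
      · simp [hv]
      · have h0 : P (s ⁻¹' {v}) = 0 := by
          have := le_antisymm (not_lt.1 hv) measureReal_nonneg
          rwa [measureReal_eq_zero_iff] at this
        filter_upwards [measure_eq_zero_iff_ae_notMem.1 h0] with ω hω _
        simpa using hω
    filter_upwards [h] with ω hω
    refine Finset.mem_filter.2 ⟨s.mem_range_self ω, ?_⟩
    by_contra hcon
    exact hω _ (s.mem_range_self ω) hcon rfl
  obtain ⟨ω₀, hω₀⟩ := hae.exists
  let g : E → S := fun v => if h : v ∈ S then ⟨v, h⟩ else ⟨s ω₀, hω₀⟩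
  refine ⟨S, fun ω => g (s ω), (s.map g).measurable, ⟨⟨_, hω₀⟩⟩, fun i => ?_, ?_⟩
  · refine (Finset.mem_filter.1 i.2).2.trans_le (measureReal_mono fun ω hω => ?_)
    have : s ω = i := hω
    simp [g, this]
  · filter_upwards [hae] with ω hω
    simp [g, hω]

/-- The support functions of `below P ν` and `below P ν'` differ by at most `W2 ν ν'` on the unit
sphere. Finitely valued `U`, covered by `inner_le_of_index`, are dense in `L²`. -/
lemma inner_le_of_forall_inner_le (hν : IsP2 ν) (hν' : IsP2 ν') {U f : Lp E 2 P}
    (hf : f ∈ below P ν) {C : ℝ} (hC : ∀ Z ∈ below P ν', ⟪U, Z⟫ ≤ C) :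
    ⟪U, f⟫ ≤ C + ‖U‖ * W2 ν ν' := by
  set R := Real.sqrt (∫ x, ‖x‖ ^ 2 ∂ν') with hR
  set W := W2 ν ν' with hW
  have hW0 : 0 ≤ W := Real.sqrt_nonneg _
  have key : ∀ ε : ℝ, 0 < ε → ⟪U, f⟫ ≤ (C + ε * R) + (‖U‖ + ε) * W + ε * ‖f‖ := by
    intro ε hε
    obtain ⟨s, hs, hsL⟩ := (Lp.memLp U).exists_simpleFunc_eLpNorm_sub_lt (by simp)
      (ENNReal.ofReal_pos.2 hε).ne'
    set V : Lp E 2 P := hsL.toLp s with hV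
    have hUV : ‖U - V‖ ≤ ε := by
      rw [Lp.norm_def]
      refine ENNReal.toReal_le_of_le_ofReal hε.le (le_trans (le_of_eq ?_) hs.le)
      refine eLpNorm_congr_ae ?_
      filter_upwards [Lp.coeFn_sub U V, hsL.coeFn_toLp] with ω h1 h2
      rw [h1, Pi.sub_apply, Pi.sub_apply, h2]
    have hVU : ‖V‖ ≤ ‖U‖ + ε := by
      have := norm_sub_norm_le V U
      rw [norm_sub_rev] at this
      linarith
    obtain ⟨S, I, hI, hS, hpos, hae⟩ := exists_index (P := P) s
    have hVI : V =ᵐ[P] fun ω => ((I ω : S) : E) := by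
      filter_upwards [hae, hsL.coeFn_toLp] with ω h1 h2
      rw [← h1, ← h2]
    have hclose : ∀ g : Lp E 2 P, |⟪U, g⟫ - ⟪V, g⟫| ≤ ε * ‖g‖ := fun g => by
      rw [← inner_sub_left]
      exact (abs_real_inner_le_norm _ _).trans
        (mul_le_mul_of_nonneg_right hUV (norm_nonneg _))
    have hCV : ∀ Z ∈ below P ν', ⟪V, Z⟫ ≤ C + ε * R := by
      intro Z hZ
      have h1 : ‖Z‖ ≤ R := Real.le_sqrt_of_sq_le (norm_sq_le_of_mem_below hν' hZ)
      have h2 := (abs_le.1 (hclose Z)).1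
      have h3 := mul_le_mul_of_nonneg_left h1 hε.le
      have h4 := hC Z hZ
      linarith
    have h1 := inner_le_of_index hν hν' hI hpos (fun i : S => (i : E)) hVI hf hCV
    have h2 := (abs_le.1 (hclose f)).2
    have h3 := mul_le_mul_of_nonneg_right hVU hW0
    linarith
  have ht : Tendsto (fun ε : ℝ => (C + ε * R) + (‖U‖ + ε) * W + ε * ‖f‖) (𝓝[>] 0)
      (𝓝 (C + ‖U‖ * W)) :=
    tendsto_nhdsWithin_of_tendsto_nhds (Continuous.tendsto' (by fun_prop) _ _ (by simp))
  exact ge_of_tendsto ht (by filter_upwards [self_mem_nhdsWithin] with ε hε using key ε hε)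

end SupportComparison

/-! ### Realizing couplings on one probability space -/

section Gluing

variable {E : Type} [NormedAddCommGroup E] [InnerProductSpace ℝ E] [FiniteDimensional ℝ E]
  [MeasurableSpace E] [BorelSpace E] {μ η : Measure E}
  {Ω : Type} [MeasurableSpace Ω] {P : Measure Ω} [IsProbabilityMeasure P]

/-- The gluing lemma: a random vector with prescribed conditional law given `X` is adjoined to the
probability space. -/
lemma exists_glue {X : Ω → E} (hX : Measurable X) (hPX : P.map X = μ) {π : Measure (E × E)}
    (hπ : IsCoupling π μ η) :
    ∃ Q : Measure (Ω × E), IsProbabilityMeasure Q ∧ MeasurePreserving Prod.fst Q P ∧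
      Q.map (fun q => (X q.1, q.2)) = π := by
  have := hπ.1
  have := FiniteDimensional.complete ℝ E
  have hκ : (P.map X) ⊗ₘ π.condKernel = π := by
    rw [hPX, ← hπ.2.1]
    exact π.disintegrate π.condKernel
  refine ⟨P ⊗ₘ (π.condKernel.comap X hX), inferInstance, ⟨measurable_fst, ?_⟩, ?_⟩
  · exact Measure.fst_compProd P _
  · conv_rhs => rw [← hκ]
    have hm : Measurable fun q : Ω × E => (X q.1, q.2) :=
      (hX.comp measurable_fst).prodMk measurable_snd
    ext s hs
    rw [Measure.map_apply hm hs, Measure.compProd_apply (hm hs), Measure.compProd_apply hs,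
      lintegral_map (Kernel.measurable_kernel_prodMk_left hs) hX]
    rfl

lemma map_comp_fst {Q : Measure (Ω × E)} (hQ : MeasurePreserving Prod.fst Q P)
    {F : Type} [MeasurableSpace F] {f : Ω → F} (hf : Measurable f) {ρ : Measure F}
    (h : P.map f = ρ) : Q.map (fun q => f q.1) = ρ := by
  rw [← h, ← hQ.map_eq, Measure.map_map hf measurable_fst]
  rfl

lemma memLp_of_map {X : Ω → E} (hX : Measurable X) (hμ : IsP2 μ) (h : P.map X = μ) :
    MemLp X 2 P :=
  hμ.memLp.comp_measurePreserving ⟨hX, h⟩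

lemma map_toLp {X : Ω → E} (hX : MemLp X 2 P) (h : P.map X = μ) : P.map (hX.toLp X) = μ := by
  rw [Measure.map_congr hX.coeFn_toLp, h]

lemma norm_sub_sq_toLp {X Y : Ω → E} (hX : MemLp X 2 P) (hY : MemLp Y 2 P) (hXm : Measurable X)
    (hYm : Measurable Y) {π : Measure (E × E)} (h : P.map (fun ω => (X ω, Y ω)) = π) :
    ‖hX.toLp X - hY.toLp Y‖ ^ 2 = ∫ q, ‖q.1 - q.2‖ ^ 2 ∂π := by
  rw [← h, integral_map (hXm.prodMk hYm).aemeasurable (by fun_prop), ← MemLp.toLp_sub,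
    norm_sq_eq_integral]
  refine integral_congr_ae ?_
  filter_upwards [(hX.sub hY).coeFn_toLp] with ω hω
  rw [hω, Pi.sub_apply]

/-- The couplings `π₀`, `π₁`, `π₂`, `π₃` of the pairs `(X, X')`, `(X, Y)`, `(X', Y')`, `(X, T)` are
realized on one probability space. -/
lemma exists_realization {μ μ' ρ ρ' η : Measure E} (hμ : IsP2 μ) (hμ' : IsP2 μ') (hρ : IsP2 ρ)
    (hρ' : IsP2 ρ') (hη : IsP2 η) {π₀ π₁ π₂ π₃ : Measure (E × E)} (h₀ : IsCoupling π₀ μ μ')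
    (h₁ : IsCoupling π₁ μ ρ) (h₂ : IsCoupling π₂ μ' ρ') (h₃ : IsCoupling π₃ μ η) :
    ∃ (Ω : Type) (_ : MeasurableSpace Ω) (P : Measure Ω) (_ : IsProbabilityMeasure P)
      (X X' Y Y' T : Lp E 2 P), P.map X = μ ∧ P.map X' = μ' ∧ P.map Y = ρ ∧ P.map Y' = ρ' ∧
      P.map T = η ∧ ‖X - X'‖ ^ 2 = ∫ q, ‖q.1 - q.2‖ ^ 2 ∂π₀ ∧
      ‖X - Y‖ ^ 2 = ∫ q, ‖q.1 - q.2‖ ^ 2 ∂π₁ ∧ ‖X' - Y'‖ ^ 2 = ∫ q, ‖q.1 - q.2‖ ^ 2 ∂π₂ ∧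
      ‖X - T‖ ^ 2 = ∫ q, ‖q.1 - q.2‖ ^ 2 ∂π₃ := by
  have := h₀.1
  have hm₀ : Measurable fun q : E × E => q.1 := measurable_fst
  have hm₀' : Measurable fun q : E × E => q.2 := measurable_snd
  obtain ⟨P₁, _, hP₁, e₁⟩ := exists_glue hm₀ h₀.2.1 h₁
  have hX₁ := map_comp_fst hP₁ hm₀ h₀.2.1
  have hX₁' := map_comp_fst hP₁ hm₀' h₀.2.2
  have f₁ : P₁.map (fun q => (q.1.1, q.1.2)) = π₀ := hP₁.map_eq
  obtain ⟨P₂, _, hP₂, e₂⟩ := exists_glue (by fun_prop) hX₁' h₂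
  have hX₂ := map_comp_fst hP₂ (by fun_prop) hX₁
  have hX₂' := map_comp_fst hP₂ (by fun_prop) hX₁'
  have f₂ := map_comp_fst hP₂ (by fun_prop) f₁
  have g₂ := map_comp_fst hP₂ (by fun_prop) e₁
  obtain ⟨P, hPp, hP, e₃⟩ := exists_glue (by fun_prop) hX₂ h₃
  have hX := map_comp_fst hP (by fun_prop) hX₂
  have hX' := map_comp_fst hP (by fun_prop) hX₂'
  have f₃ := map_comp_fst hP (by fun_prop) f₂
  have g₃ := map_comp_fst hP (by fun_prop) g₂
  have k₃ := map_comp_fst hP (by fun_prop) e₂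
  have hsnd : ∀ {π : Measure (E × E)} {m n : Measure E} {f g : (((E × E) × E) × E) × E → E},
      Measurable f → Measurable g → P.map (fun q => (f q, g q)) = π → IsCoupling π m n →
      P.map g = n := by
    intro π m n f g hf hg h hπ
    rw [← hπ.2.2, ← h, Measure.map_map measurable_snd (hf.prodMk hg)]
    rfl
  have hY := hsnd (by fun_prop) (by fun_prop) g₃ h₁
  have hY' := hsnd (by fun_prop) (by fun_prop) k₃ h₂
  have hT := hsnd (by fun_prop) (by fun_prop) e₃ h₃
  have mX := memLp_of_map (by fun_prop) hμ hX
  have mX' := memLp_of_map (by fun_prop) hμ' hX'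
  have mY := memLp_of_map (by fun_prop) hρ hY
  have mY' := memLp_of_map (by fun_prop) hρ' hY'
  have mT := memLp_of_map (by fun_prop) hη hT
  exact ⟨_, _, P, hPp, mX.toLp _, mX'.toLp _, mY.toLp _, mY'.toLp _, mT.toLp _, map_toLp mX hX,
    map_toLp mX' hX', map_toLp mY hY, map_toLp mY' hY', map_toLp mT hT,
    norm_sub_sq_toLp mX mX' (by fun_prop) (by fun_prop) f₃,
    norm_sub_sq_toLp mX mY (by fun_prop) (by fun_prop) g₃,
    norm_sub_sq_toLp mX' mY' (by fun_prop) (by fun_prop) k₃,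
    norm_sub_sq_toLp mX mT (by fun_prop) (by fun_prop) e₃⟩

end Gluing

/-! ### Near-projections and stability -/

section Stability

/-- The variational inequality of the projection onto a convex set, for a point `Y` that minimizes
the squared distance to `X` only up to `δ`. -/
lemma inner_le_of_near {H : Type*} [NormedAddCommGroup H] [InnerProductSpace ℝ H] {K : Set H}
    (hK : Convex ℝ K) {X Y : H} (hY : Y ∈ K) {δ : ℝ} (hδ : 0 < δ) (hδ1 : δ ≤ 1)
    (h : ∀ Z ∈ K, ‖X - Y‖ ^ 2 ≤ ‖X - Z‖ ^ 2 + δ) {Z : H} (hZ : Z ∈ K) :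
    ⟪X - Y, Z - Y⟫ ≤ Real.sqrt δ * (1 + ‖Z - Y‖ ^ 2) / 2 := by
  -- The step `√δ` along the segment from `Y` to `Z` balances the terms `δ / t` and `t`.
  set t := Real.sqrt δ with ht
  have ht0 : 0 < t := Real.sqrt_pos.2 hδ
  have ht1 : t ≤ 1 := Real.sqrt_le_one.2 hδ1
  have htt : t ^ 2 = δ := Real.sq_sqrt hδ.le
  have h1 := h _ (hK.add_smul_sub_mem hY hZ ⟨ht0.le, ht1⟩)
  have h2 : X - (Y + t • (Z - Y)) = (X - Y) - t • (Z - Y) := by abel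
  rw [h2, norm_sub_sq_real (X - Y), real_inner_smul_right, norm_smul, mul_pow, Real.norm_eq_abs,
    sq_abs] at h1
  have h3 : t * ⟪X - Y, Z - Y⟫ ≤ t * (t * (1 + ‖Z - Y‖ ^ 2) / 2) := by nlinarith
  exact le_of_mul_le_mul_left h3 ht0

variable {E : Type} [NormedAddCommGroup E] [InnerProductSpace ℝ E] [FiniteDimensional ℝ E]
  [MeasurableSpace E] [BorelSpace E] {ν ν' : Measure E}
  {Ω : Type} [MeasurableSpace Ω] {P : Measure Ω} [IsProbabilityMeasure P]

lemma inner_le_of_near_below (hν : IsP2 ν) {X Y : Lp E 2 P} (hY : Y ∈ below P ν) {δ : ℝ}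
    (hδ : 0 < δ) (hδ1 : δ ≤ 1) (h : ∀ Z ∈ below P ν, ‖X - Y‖ ^ 2 ≤ ‖X - Z‖ ^ 2 + δ)
    {Z : Lp E 2 P} (hZ : Z ∈ below P ν) :
    ⟪X - Y, Z - Y⟫ ≤ Real.sqrt δ * (1 + 4 * ∫ x, ‖x‖ ^ 2 ∂ν) / 2 := by
  have h0 := inner_le_of_near (H := Lp E 2 P) (K := below P ν) (X := X) (convex_below hν) hY hδ hδ1
    h hZ
  refine h0.trans ?_
  have h1 := norm_sq_le_of_mem_below hν hY
  have h2 := norm_sq_le_of_mem_below hν hZ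
  have h3 : ‖Z - Y‖ ^ 2 ≤ 4 * ∫ x, ‖x‖ ^ 2 ∂ν := by
    have := pow_le_pow_left₀ (norm_nonneg _) (norm_sub_le Z Y) 2
    nlinarith [sq_nonneg (‖Z‖ - ‖Y‖)]
  gcongr

/-- If `ρ` nearly minimizes the distance to the law of `X` among the laws below `ν`, and the distance
from `X` to `Y` is nearly that of their laws when `Y` has law `ρ`, then `Y` nearly minimizes the
distance to `X` over `below P ν`. -/
lemma near_of_coupling {μ ρ : Measure E} {X Y : Lp E 2 P} (hX : P.map X = μ) {ε : ℝ}
    (hρ : ∀ ρ', IsP2 ρ' → ConvexOrder ρ' ν → W2sq ρ μ ≤ W2sq ρ' μ + ε)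
    (hXY : ‖X - Y‖ ^ 2 ≤ W2sq μ ρ + ε) :
    ∀ Z ∈ below P ν, ‖X - Y‖ ^ 2 ≤ ‖X - Z‖ ^ 2 + 2 * ε := by
  intro Z hZ
  have h1 := hρ _ (isP2_law Z) hZ
  have h2 := W2sq_law_le Z X
  rw [hX, norm_sub_rev] at h2
  rw [W2sq_comm] at hXY
  linarith

/-- Near-projections `Y` and `T` of the same point onto `below P ν` and `below P ν'`. Neither set need
contain the near-projection onto the other, so the variational inequalities are transferred from one
set to the other by `inner_le_of_forall_inner_le`. -/
lemma norm_sub_sq_le_of_near (hν : IsP2 ν) (hν' : IsP2 ν') {X Y T : Lp E 2 P}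
    (hY : Y ∈ below P ν) (hT : T ∈ below P ν') {e : ℝ}
    (hYe : ∀ Z ∈ below P ν, ⟪X - Y, Z - Y⟫ ≤ e) (hTe : ∀ Z ∈ below P ν', ⟪X - T, Z - T⟫ ≤ e) :
    ‖Y - T‖ ^ 2 ≤ 2 * e + (‖X - Y‖ + ‖X - T‖) * W2 ν ν' := by
  have h1 : ⟪X - T, Y⟫ ≤ (⟪X - T, T⟫ + e) + ‖X - T‖ * W2 ν ν' :=
    inner_le_of_forall_inner_le hν hν' hY fun Z hZ => by
      have := hTe Z hZ
      rw [inner_sub_right] at this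
      linarith
  have h2 : ⟪X - Y, T⟫ ≤ (⟪X - Y, Y⟫ + e) + ‖X - Y‖ * W2 ν' ν :=
    inner_le_of_forall_inner_le hν' hν hT fun Z hZ => by
      have := hYe Z hZ
      rw [inner_sub_right] at this
      linarith
  rw [W2_comm ν' ν] at h2
  have h3 : ‖Y - T‖ ^ 2 = (⟪X - T, Y⟫ - ⟪X - T, T⟫) + (⟪X - Y, T⟫ - ⟪X - Y, Y⟫) := by
    rw [← real_inner_self_eq_norm_sq]
    simp only [inner_sub_left, inner_sub_right, real_inner_comm]
    ring
  linarith

/-- Near-projections of two points onto the same set: the projection is nearly nonexpansive. -/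
lemma norm_sub_le_of_near {H : Type*} [NormedAddCommGroup H] [InnerProductSpace ℝ H]
    {X X' T Y : H} {e e' : ℝ} (he : 0 ≤ e + e') (hT : ⟪X - T, Y - T⟫ ≤ e)
    (hY : ⟪X' - Y, T - Y⟫ ≤ e') : ‖T - Y‖ ≤ ‖X - X'‖ + Real.sqrt (e + e') := by
  have h1 : ‖T - Y‖ ^ 2 = ⟪X - X', T - Y⟫ + ⟪X - T, Y - T⟫ + ⟪X' - Y, T - Y⟫ := by
    rw [← real_inner_self_eq_norm_sq]
    simp only [inner_sub_left, inner_sub_right, real_inner_comm]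
    ring
  have h2 := real_inner_le_norm (X - X') (T - Y)
  have h3 := Real.sq_sqrt he
  have h4 := Real.sqrt_nonneg (e + e')
  have h5 := norm_nonneg (X - X')
  have h6 := norm_nonneg (T - Y)
  by_contra! hcon
  nlinarith

/-- An infimum only up to `ε` suffices here, which avoids proving that projections exist. -/
lemma exists_near_minimizer (hν : IsP2 ν) (μ : Measure E) {ε : ℝ} (hε : 0 < ε) :
    ∃ η, IsP2 η ∧ ConvexOrder η ν ∧
      ∀ ρ, IsP2 ρ → ConvexOrder ρ ν → W2sq η μ ≤ W2sq ρ μ + ε := by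
  set S := {c : ℝ | ∃ ρ, IsP2 ρ ∧ ConvexOrder ρ ν ∧ c = W2sq ρ μ} with hS
  have hne : S.Nonempty := ⟨_, ν, hν, fun _ _ _ _ => le_rfl, rfl⟩
  have hbdd : BddBelow S := ⟨0, by rintro _ ⟨ρ, -, -, rfl⟩; exact W2sq_nonneg _ _⟩
  obtain ⟨_, ⟨η, h1, h2, rfl⟩, h3⟩ := Real.lt_sInf_add_pos hne hε
  refine ⟨η, h1, h2, fun ρ hρ hρν => ?_⟩
  have := csInf_le hbdd ⟨ρ, hρ, hρν, rfl⟩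
  linarith

lemma IsBackwardProj.W2sq_le {μ μs ρ : Measure E} (h : IsBackwardProj ν μ μs) (hρ : IsP2 ρ)
    (hρν : ConvexOrder ρ ν) : W2sq μs μ ≤ W2sq ρ μ := by
  rw [← W2_sq, ← W2_sq]
  exact pow_le_pow_left₀ (Real.sqrt_nonneg _) (h.2.2 ρ hρ hρν) 2

/-- The stability estimate with errors that vanish with `ε`. In the proof, `T` is a near-projection of
the lift `X` of `μ` onto `below P ν'`, intermediate between the lifts `Y` and `Y'` of `μs` and
`μs'`. -/
lemma W2_le_approx {μ μ' μs μs' : Measure E} (hμ : IsP2 μ) (hμ' : IsP2 μ') (hν : IsP2 ν)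
    (hν' : IsP2 ν') (hμs : IsBackwardProj ν μ μs) (hμs' : IsBackwardProj ν' μ' μs') {ε e : ℝ}
    (hε : 0 < ε) (hε1 : 2 * ε ≤ 1)
    (he : e = Real.sqrt (2 * ε) * (1 + 4 * (∫ x, ‖x‖ ^ 2 ∂ν + ∫ x, ‖x‖ ^ 2 ∂ν')) / 2) :
    W2 μs μs' ≤ Real.sqrt (2 * e + (Real.sqrt (W2sq μ ν + 2 * ε)
      + Real.sqrt (W2sq μ ν' + 2 * ε)) * W2 ν ν')
      + (Real.sqrt (W2sq μ μ' + ε) + Real.sqrt (e + e)) := by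
  obtain ⟨η, hη, hην, hηmin⟩ := exists_near_minimizer hν' μ hε
  obtain ⟨π₀, h₀, c₀⟩ := exists_coupling_lt hμ hμ' hε
  obtain ⟨π₁, h₁, c₁⟩ := exists_coupling_lt hμ hμs.1 hε
  obtain ⟨π₂, h₂, c₂⟩ := exists_coupling_lt hμ' hμs'.1 hε
  obtain ⟨π₃, h₃, c₃⟩ := exists_coupling_lt hμ hη hε
  obtain ⟨Ω, _, P, _, X, X', Y, Y', T, hX, hX', hY, hY', hT, d₀, d₁, d₂, d₃⟩ :=
    exists_realization hμ hμ' hμs.1 hμs'.1 hη h₀ h₁ h₂ h₃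
  rw [← d₀] at c₀
  rw [← d₁] at c₁
  rw [← d₂] at c₂
  rw [← d₃] at c₃
  have hYK : Y ∈ below P ν := (congrArg (ConvexOrder · _) hY).mpr hμs.2.1
  have hYK' : Y' ∈ below P ν' := (congrArg (ConvexOrder · _) hY').mpr hμs'.2.1
  have hTK : T ∈ below P ν' := (congrArg (ConvexOrder · _) hT).mpr hην
  have hδ : 0 < 2 * ε := by positivity
  have m0 : 0 ≤ ∫ x, ‖x‖ ^ 2 ∂ν := integral_nonneg fun x => by positivity
  have m0' : 0 ≤ ∫ x, ‖x‖ ^ 2 ∂ν' := integral_nonneg fun x => by positivity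
  have he0 : 0 ≤ e := by rw [he]; positivity
  have hle : Real.sqrt (2 * ε) * (1 + 4 * ∫ x, ‖x‖ ^ 2 ∂ν) / 2 ≤ e := by
    rw [he]; gcongr; linarith
  have hle' : Real.sqrt (2 * ε) * (1 + 4 * ∫ x, ‖x‖ ^ 2 ∂ν') / 2 ≤ e := by
    rw [he]; gcongr; linarith
  have hYe : ∀ Z ∈ below P ν, ⟪X - Y, Z - Y⟫ ≤ e := fun Z hZ =>
    (inner_le_of_near_below hν hYK hδ hε1 (near_of_coupling hX (fun ρ hρ hρν =>
      (hμs.W2sq_le hρ hρν).trans (by linarith)) c₁.le) hZ).trans hle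
  have hYe' : ∀ Z ∈ below P ν', ⟪X' - Y', Z - Y'⟫ ≤ e := fun Z hZ =>
    (inner_le_of_near_below hν' hYK' hδ hε1 (near_of_coupling hX' (fun ρ hρ hρν =>
      (hμs'.W2sq_le hρ hρν).trans (by linarith)) c₂.le) hZ).trans hle'
  have hTe : ∀ Z ∈ below P ν', ⟪X - T, Z - T⟫ ≤ e := fun Z hZ =>
    (inner_le_of_near_below hν' hTK hδ hε1 (near_of_coupling hX hηmin c₃.le) hZ).trans hle'
  have hXY : ‖X - Y‖ ≤ Real.sqrt (W2sq μ ν + 2 * ε) := by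
    refine Real.le_sqrt_of_sq_le ?_
    have := hμs.W2sq_le hν fun _ _ _ _ => le_rfl
    rw [W2sq_comm μs, W2sq_comm ν] at this
    linarith
  have hXT : ‖X - T‖ ≤ Real.sqrt (W2sq μ ν' + 2 * ε) := by
    refine Real.le_sqrt_of_sq_le ?_
    have := hηmin ν' hν' fun _ _ _ _ => le_rfl
    rw [W2sq_comm η, W2sq_comm ν'] at this
    linarith
  have hXX' : ‖X - X'‖ ≤ Real.sqrt (W2sq μ μ' + ε) := Real.le_sqrt_of_sq_le c₀.le
  have hYT : ‖Y - T‖ ≤ Real.sqrt (2 * e + (Real.sqrt (W2sq μ ν + 2 * ε)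
      + Real.sqrt (W2sq μ ν' + 2 * ε)) * W2 ν ν') := by
    refine Real.le_sqrt_of_sq_le ((norm_sub_sq_le_of_near hν hν' hYK hTK hYe hTe).trans ?_)
    have : 0 ≤ W2 ν ν' := Real.sqrt_nonneg _
    gcongr
  have hTY' := norm_sub_le_of_near (by linarith) (hTe Y' hYK') (hYe' T hTK)
  have hW : W2 μs μs' ≤ ‖Y - Y'‖ := by
    refine Real.sqrt_le_iff.2 ⟨norm_nonneg _, ?_⟩
    rw [← hY, ← hY']
    exact W2sq_law_le Y Y'
  have htri := norm_sub_le_norm_sub_add_norm_sub Y T Y'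
  linarith

theorem W2_backwardProj_le {μ μ' μs μs' : Measure E} (hμ : IsP2 μ) (hμ' : IsP2 μ') (hν : IsP2 ν)
    (hν' : IsP2 ν') (hμs : IsBackwardProj ν μ μs) (hμs' : IsBackwardProj ν' μ' μs') :
    W2 μs μs' ≤ W2 μ μ' + Real.sqrt ((W2 μ ν + W2 μ ν') * W2 ν ν') := by
  set M := 1 + 4 * (∫ x, ‖x‖ ^ 2 ∂ν + ∫ x, ‖x‖ ^ 2 ∂ν')
  have ht : Tendsto (fun ε : ℝ =>
      Real.sqrt (2 * (Real.sqrt (2 * ε) * M / 2) + (Real.sqrt (W2sq μ ν + 2 * ε)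
        + Real.sqrt (W2sq μ ν' + 2 * ε)) * W2 ν ν') + (Real.sqrt (W2sq μ μ' + ε)
        + Real.sqrt (Real.sqrt (2 * ε) * M / 2 + Real.sqrt (2 * ε) * M / 2))) (𝓝[>] 0)
      (𝓝 (W2 μ μ' + Real.sqrt ((W2 μ ν + W2 μ ν') * W2 ν ν'))) :=
    tendsto_nhdsWithin_of_tendsto_nhds
      (Continuous.tendsto' (by fun_prop) _ _ (by simp [W2, add_comm]))
  refine ge_of_tendsto ht ?_
  filter_upwards [Ioo_mem_nhdsGT (show (0 : ℝ) < 1 / 2 by norm_num)] with ε hε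
  exact W2_le_approx hμ hμ' hν hν' hμs hμs' hε.1 (by linarith [hε.2]) rfl

end Stability

/-- stability of the backward projection in both arguments. -/
theorem stmt11 {d : ℕ} (hd : 1 ≤ d)
    (μ μ' ν ν' μs μs' : Measure (EuclideanSpace ℝ (Fin d)))
    (hμ : IsP2 μ) (hμ' : IsP2 μ') (hν : IsP2 ν) (hν' : IsP2 ν')
    (hμs : IsBackwardProj ν μ μs) (hμs' : IsBackwardProj ν' μ' μs') :
    W2 μs μs' ≤ W2 μ μ' + Real.sqrt ((W2 μ ν + W2 μ ν') * W2 ν ν') :=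
  W2_backwardProj_le hμ hμ' hν hν' hμs hμs'

end
end
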